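/- Let Ω ⊂ ℂ be a bounded domain whose boundary is a Jordan curve satisfying the Ahlfors three-point condition with constant C ≥ 1, and set K₀ = 2^{−10}·exp{(1 + e^{2π}C⁵)²}. Then for every α with 2 < α, α(K₀² − 1) < 2K₀², and ν := 10^{4α}·((24π²/2^{20})·e^{2(1 + e^{2π}C⁵)²})^α·(α−2)/(α−1) < 1, every test function f on Ω satisfies ∬_Ω |f − f_Ω|² dxdy ≤ (C_α²·e^{2(1 + e^{2π}C⁵)²}/(2^{20}π)) · ((2α−2)/(α−2))^{(2α−2)/α} · exp{π²(2 + π⁴)²·e^{2(1 + e^{2π}C⁵)²}/(2^{21}·log 3)} · |Ω| · ∬_Ω |∇f|² dxdy, where C_α = 10⁶/[(α−1)(1−ν)]^{1/α}. -/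

import Mathlib

open MeasureTheory Metric Real
open scoped ENNReal NNReal

/-!
Bounded turning lets a logarithm of `(z - a) / (z - b)` on the curve be continued to all points that
are close to the curve compared with their distances to `a` and `b`. By Eilenberg's criterion these
points do not separate `a` from `b`, so any two points of the domain are joined by a cigar; joining
to a point of maximal depth turns cigars into carrots (the John condition). Telescoping the averages
of `f` over a minimal chain of balls along the carrot from `x` bounds `|f x - c|` by a multiple of
the Riesz potential of `|∇f|` at `x`, and Schur's test yields the Poincaré inequality. The constant
obtained is of order `C ^ 4`, far below the exponential of `C ^ 10` in the stated one.
-/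

/-! ### Logarithms and separation in the plane -/

theorem eq_of_exp_eq_const_of_isPreconnected {X : Type*} [TopologicalSpace X] {S : Set X}
    (hS : IsPreconnected S) {φ : X → ℂ} (hφ : ContinuousOn φ S) {c : ℂ}
    (hc : ∀ x ∈ S, Complex.exp (φ x) = c) {x y : X} (hx : x ∈ S) (hy : y ∈ S) : φ x = φ y :=
  Complex.isCoveringMap_exp.constOn_of_comp hS hφ
    (fun u hu v hv => Subtype.ext ((hc u hu).trans (hc v hv).symm)) hx hy

theorem not_exists_continuousOn_log_sphere (a : ℂ) {R : ℝ} (hR : 0 < R) :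
    ¬ ∃ φ : ℂ → ℂ, ContinuousOn φ (sphere a R) ∧
      ∀ w ∈ sphere a R, Complex.exp (φ w) = w - a := by
  rintro ⟨φ, hφ, hexp⟩
  have hmem (θ : ℝ) : circleMap a R θ ∈ sphere a R := circleMap_mem_sphere a hR.le θ
  have hconst := eq_of_exp_eq_const_of_isPreconnected isPreconnected_univ
    (φ := fun θ : ℝ => φ (circleMap a R θ) - θ * Complex.I) (c := R)
    ((hφ.comp_continuous (continuous_circleMap a R) hmem).sub (by fun_prop)).continuousOn
    (fun θ _ => by
      rw [Complex.exp_sub, hexp _ (hmem θ), circleMap, add_sub_cancel_left,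
        mul_div_cancel_right₀ _ (Complex.exp_ne_zero _)])
    (Set.mem_univ 0) (Set.mem_univ (2 * π))
  have hperiod : circleMap a R (2 * π) = circleMap a R 0 := by
    simpa only [zero_add] using periodic_circleMap a R 0
  have : (2 * π : ℂ) * Complex.I = 0 := by
    simp only [hperiod] at hconst
    push_cast at hconst
    linear_combination hconst
  simp [Real.pi_ne_zero] at this

theorem frontier_connectedComponentIn_compl_subset {X : Type*} [TopologicalSpace X]
    [LocallyConnectedSpace X] {K : Set X} (hK : IsClosed K) (a : X) :
    frontier (connectedComponentIn Kᶜ a) ⊆ K := by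
  intro z hz
  by_contra hzK
  have hz_mem : z ∈ connectedComponentIn Kᶜ z := mem_connectedComponentIn hzK
  obtain ⟨y, hyz, hya⟩ :=
    mem_closure_iff.1 hz.1 _ hK.isOpen_compl.connectedComponentIn hz_mem
  have hEq : connectedComponentIn Kᶜ a = connectedComponentIn Kᶜ z :=
    (connectedComponentIn_eq hya).trans (connectedComponentIn_eq hyz).symm
  exact hz.2 (hK.isOpen_compl.connectedComponentIn.interior_eq.symm ▸ hEq ▸ hz_mem)

theorem exists_continuous_log {F : ℂ → ℂ} (hF : Continuous F) (hF₀ : ∀ w, F w ≠ 0) :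
    ∃ φ : ℂ → ℂ, Continuous φ ∧ ∀ w, Complex.exp (φ w) = F w := by
  have : SimplyConnectedSpace ℂ := SimplyConnectedSpace.ofContractible ℂ
  have hsc : IsSimplyConnected (Set.univ : Set ℂ) :=
    (Homeomorph.Set.univ ℂ).toHomotopyEquiv.simplyConnectedSpace_iff.2 this
  obtain ⟨φ, hφ, hexp⟩ := Complex.exists_continuousOn_eqOn_exp_comp hsc isOpen_univ
    hF.continuousOn (by rintro ⟨w, -, hw⟩; exact hF₀ w hw)
  exact ⟨φ, continuousOn_univ.1 hφ, fun w => hexp (Set.mem_univ w)⟩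

/-- Eilenberg's criterion. Otherwise `z - b` times the exponential of an extension of `g`, inside
the component `A` of `a`, glues to `z - a` outside `A`; a global logarithm of this zero-free
function is a continuous logarithm of `z - a` on a large circle. -/
theorem mem_connectedComponentIn_of_continuousOn_log {K : Set ℂ} (hK : IsClosed K) {a b : ℂ}
    (ha : a ∉ K) (hb : b ∉ K) (hbdd : Bornology.IsBounded (connectedComponentIn Kᶜ a))
    {g : ℂ → ℂ} (hg : ContinuousOn g K)
    (hexp : ∀ z ∈ K, Complex.exp (g z) = (z - a) / (z - b)) :
    b ∈ connectedComponentIn Kᶜ a := by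
  classical
  by_contra hbA
  set A := connectedComponentIn Kᶜ a
  have haA : a ∈ A := mem_connectedComponentIn ha
  obtain ⟨G, hG⟩ := ContinuousMap.exists_restrict_eq hK
    ⟨K.domRestrict g, continuousOn_iff_continuous_domRestrict.mp hg⟩
  have hGg (z) (hz : z ∈ K) : G z = g z := congrArg (fun h => h ⟨z, hz⟩) hG
  let F : ℂ → ℂ := A.piecewise (fun z => (z - b) * Complex.exp (G z)) (fun z => z - a)
  have hF : Continuous F := by
    refine Continuous.piecewise (fun z hz => ?_) (by fun_prop) (by fun_prop)
    have hzK : z ∈ K := frontier_connectedComponentIn_compl_subset hK a hz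
    have hzb : z - b ≠ 0 := sub_ne_zero.2 (ne_of_mem_of_not_mem hzK hb)
    rw [hGg z hzK, hexp z hzK, mul_div_cancel₀ _ hzb]
  have hF₀ (z) : F z ≠ 0 := by
    by_cases hz : z ∈ A
    · simp only [F, Set.piecewise_eq_of_mem _ _ _ hz]
      exact mul_ne_zero (sub_ne_zero.2 (ne_of_mem_of_not_mem hz hbA)) (Complex.exp_ne_zero _)
    · simp only [F, Set.piecewise_eq_of_notMem _ _ _ hz]
      exact sub_ne_zero.2 (ne_of_mem_of_not_mem haA hz).symm
  obtain ⟨φ, hφ, hφF⟩ := exists_continuous_log hF hF₀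
  obtain ⟨R, hR, hAR⟩ := hbdd.subset_ball_lt 0 a
  refine not_exists_continuousOn_log_sphere a hR ⟨φ, hφ.continuousOn, fun w hw => ?_⟩
  have hwA : w ∉ A := fun h => (mem_ball.1 (hAR h)).ne (mem_sphere.1 hw)
  exact (hφF w).trans (Set.piecewise_eq_of_notMem _ _ _ hwA)

theorem sub_div_sub_mem_slitPlane {p w c : ℂ} (h : dist p w < dist w c) :
    (p - c) / (w - c) ∈ Complex.slitPlane := by
  have hwc : w - c ≠ 0 := sub_ne_zero.2 (dist_pos.1 (dist_nonneg.trans_lt h))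
  have hsplit : (p - c) / (w - c) = 1 + (p - w) / (w - c) := by
    field_simp
    ring
  rw [hsplit]
  refine Complex.mem_slitPlane_of_norm_lt_one ?_
  rwa [norm_div, div_lt_one (norm_pos_iff.2 hwc), ← dist_eq_norm, ← dist_eq_norm]

theorem exists_continuousOn_log_div {Γ Ω : Set ℂ} (hΓ : IsClosed Γ) (hΩ : IsPreconnected Ω)
    (hd : Disjoint Γ Ω) {a b : ℂ} (ha : a ∈ Ω) (hb : b ∈ Ω) :
    ∃ g : ℂ → ℂ, ContinuousOn g Γ ∧ ∀ z ∈ Γ, Complex.exp (g z) = (z - a) / (z - b) := by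
  have hne {z x} (hz : z ∈ Γ) (hx : x ∈ Ω) : z - x ≠ 0 :=
    sub_ne_zero.2 (hd.ne_of_mem hz hx)
  refine hΩ.induction₂ (fun a b => ∃ g : ℂ → ℂ, ContinuousOn g Γ ∧
    ∀ z ∈ Γ, Complex.exp (g z) = (z - a) / (z - b)) (fun x hx => ?_) ?_ ?_ ha hb
  · obtain ⟨ε, hε, hball⟩ := isOpen_iff.1 hΓ.isOpen_compl x (hd.notMem_of_mem_right hx)
    filter_upwards [mem_nhdsWithin_of_mem_nhds (ball_mem_nhds x hε)] with y hy
    have hslit (z) (hz : z ∈ Γ) : (z - y) / (z - x) ∈ Complex.slitPlane := by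
      have hzx : ε ≤ dist x z := by
        by_contra! hlt
        exact hball (mem_ball'.2 hlt) hz
      have := sub_div_sub_mem_slitPlane (p := y) (w := x) (c := z) (hy.trans_le hzx)
      rwa [← neg_sub z y, ← neg_sub z x, neg_div_neg_eq] at this
    refine ⟨fun z => -Complex.log ((z - y) / (z - x)), ?_, fun z hz => ?_⟩
    · exact ((ContinuousOn.div (by fun_prop) (by fun_prop) fun z hz => hne hz hx).clog hslit).neg
    · rw [Complex.exp_neg, Complex.exp_log (Complex.slitPlane_ne_zero (hslit z hz)), inv_div]
  · rintro x y z - hy - ⟨g, hg, hgexp⟩ ⟨h, hh, hhexp⟩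
    refine ⟨g + h, hg.add hh, fun w hw => ?_⟩
    rw [Pi.add_apply, Complex.exp_add, hgexp w hw, hhexp w hw, div_mul_div_cancel₀ (hne hw hy)]
  · rintro x y - - ⟨g, hg, hgexp⟩
    refine ⟨-g, hg.neg, fun w hw => ?_⟩
    rw [Pi.neg_apply, Complex.exp_neg, hgexp w hw, inv_div]

/-! ### Bounded turning gives cigars -/

/-- The three-point condition: any two points `p`, `q` of `Γ` lie in a connected part of `Γ` that
stays within `C * dist p q` of `p`. -/
def BoundedTurning {X : Type*} [PseudoMetricSpace X] (C : ℝ) (Γ : Set X) : Prop :=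
  ∀ p ∈ Γ, ∀ q ∈ Γ, ∃ S ⊆ Γ, IsPreconnected S ∧ p ∈ S ∧ q ∈ S ∧ ∀ s ∈ S, dist s p ≤ C * dist p q

/-- Any two points of `Ω` lie in a connected part of `Ω` whose width at `w` is comparable to the
distance from `w` to the nearer of the two points, a connected set standing for the usual arc. -/
def HasCigars {X : Type*} [PseudoMetricSpace X] (k : ℝ) (Ω : Set X) : Prop :=
  ∀ a ∈ Ω, ∀ b ∈ Ω, ∃ A ⊆ Ω, IsPreconnected A ∧ a ∈ A ∧ b ∈ A ∧
    ∀ w ∈ A, min (dist w a) (dist w b) ≤ k * infDist w Ωᶜ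

/-- The logarithm of `(w - a) / (w - b)` obtained from the value `L p` of a logarithm of
`(p - a) / (p - b)` by continuation along the segment from `p` to `w`; it is meaningful when `w` is
closer to `p` than to `a` and `b`. -/
noncomputable def logTransport (L : ℂ → ℂ) (a b p w : ℂ) : ℂ :=
  L p - Complex.log ((p - a) / (w - a)) + Complex.log ((p - b) / (w - b))

section logTransport

variable {L : ℂ → ℂ} {a b p q w : ℂ} {C : ℝ} {Γ : Set ℂ}

theorem exp_logTransport (hL : Complex.exp (L p) = (p - a) / (p - b))
    (h : dist p w < min (dist w a) (dist w b)) :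
    Complex.exp (logTransport L a b p w) = (w - a) / (w - b) := by
  have ha := Complex.slitPlane_ne_zero (sub_div_sub_mem_slitPlane (lt_min_iff.1 h).1)
  have hb := Complex.slitPlane_ne_zero (sub_div_sub_mem_slitPlane (lt_min_iff.1 h).2)
  obtain ⟨hpa, hwa⟩ := div_ne_zero_iff.1 ha
  obtain ⟨hpb, hwb⟩ := div_ne_zero_iff.1 hb
  rw [logTransport, Complex.exp_add, Complex.exp_sub, Complex.exp_log ha, Complex.exp_log hb, hL]
  field_simp

theorem continuousOn_logTransport_base {S : Set ℂ} (hL : ContinuousOn L S)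
    (hS : ∀ s ∈ S, dist s w < min (dist w a) (dist w b)) :
    ContinuousOn (fun s => logTransport L a b s w) S :=
  (hL.sub (ContinuousOn.clog (by fun_prop) fun s hs =>
      sub_div_sub_mem_slitPlane (lt_min_iff.1 (hS s hs)).1)).add
    (ContinuousOn.clog (by fun_prop) fun s hs =>
      sub_div_sub_mem_slitPlane (lt_min_iff.1 (hS s hs)).2)

theorem continuousAt_logTransport (h : dist p w < min (dist w a) (dist w b)) :
    ContinuousAt (fun w' => logTransport L a b p w') w := by
  have hlog {c : ℂ} (hc : dist p w < dist w c) :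
      ContinuousAt (fun w' => Complex.log ((p - c) / (w' - c))) w := by
    have hwc : w - c ≠ 0 := sub_ne_zero.2 (dist_pos.1 (dist_nonneg.trans_lt hc))
    refine ContinuousAt.clog ?_ (sub_div_sub_mem_slitPlane hc)
    exact continuousAt_const.div (by fun_prop) hwc
  simp only [logTransport]
  exact (continuousAt_const.sub (hlog (lt_min_iff.1 h).1)).add (hlog (lt_min_iff.1 h).2)

theorem BoundedTurning.logTransport_eq (hΓ : BoundedTurning C Γ) (hC : 0 ≤ C)
    (hL : ContinuousOn L Γ) (hexp : ∀ s ∈ Γ, Complex.exp (L s) = (s - a) / (s - b))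
    (hpΓ : p ∈ Γ) (hqΓ : q ∈ Γ)
    (hp : (2 * C + 1) * dist p w < min (dist w a) (dist w b))
    (hq : (2 * C + 1) * dist q w < min (dist w a) (dist w b)) :
    logTransport L a b p w = logTransport L a b q w := by
  obtain ⟨S, hSΓ, hS, hpS, hqS, hSdist⟩ := hΓ p hpΓ q hqΓ
  have hSw (s) (hs : s ∈ S) : dist s w < min (dist w a) (dist w b) := by
    have hsp := hSdist s hs
    have hpq : C * dist p q ≤ C * (dist p w + dist q w) := by gcongr; exact dist_triangle_right ..
    have := dist_triangle s p w
    rcases le_total (dist p w) (dist q w) with h | h <;> nlinarith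
  exact eq_of_exp_eq_const_of_isPreconnected hS (continuousOn_logTransport_base (hL.mono hSΓ) hSw)
    (fun s hs => exp_logTransport (hexp s (hSΓ hs)) (hSw s hs)) hpS hqS

theorem BoundedTurning.exists_continuousOn_log (hΓ : BoundedTurning C Γ) (hC : 0 ≤ C)
    (hL : ContinuousOn L Γ) (hexp : ∀ s ∈ Γ, Complex.exp (L s) = (s - a) / (s - b))
    {K : Set ℂ} (hK : ∀ w ∈ K, ∃ p ∈ Γ, (2 * C + 1) * dist p w < min (dist w a) (dist w b)) :
    ∃ g : ℂ → ℂ, ContinuousOn g K ∧ ∀ w ∈ K, Complex.exp (g w) = (w - a) / (w - b) := by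
  choose! P hPΓ hP using hK
  have hPw (w) (hw : w ∈ K) : dist (P w) w < min (dist w a) (dist w b) :=
    (le_mul_of_one_le_left dist_nonneg (by linarith)).trans_lt (hP w hw)
  refine ⟨fun w => logTransport L a b (P w) w, fun w hw => ?_,
    fun w hw => exp_logTransport (hexp _ (hPΓ w hw)) (hPw w hw)⟩
  have hopen : ∀ᶠ w' in nhds w, (2 * C + 1) * dist (P w) w' < min (dist w' a) (dist w' b) :=
    (isOpen_lt (by fun_prop) (by fun_prop)).mem_nhds (hP w hw)
  refine (continuousAt_logTransport (hPw w hw)).continuousWithinAt.congr_of_eventuallyEq ?_ rfl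
  -- Near `w` the base point may be frozen at `P w`, so `P` need not be continuous.
  filter_upwards [mem_nhdsWithin_of_mem_nhds hopen, self_mem_nhdsWithin] with w' hw' hw'K
  exact hΓ.logTransport_eq hC hL hexp (hPΓ w' hw'K) (hPΓ w hw) (hP w' hw'K) hw'

end logTransport

theorem infDist_le_infDist_compl_connectedComponentIn {E : Type*} [SeminormedAddCommGroup E]
    [NormedSpace ℝ E] {Γ : Set E} {w z : E} (hw : w ∈ connectedComponentIn Γᶜ z) :
    infDist w Γ ≤ infDist w (connectedComponentIn Γᶜ z)ᶜ := by
  have hΓ : Γ ⊆ (connectedComponentIn Γᶜ z)ᶜ :=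
    Set.subset_compl_comm.1 (connectedComponentIn_subset _ _)
  rcases (connectedComponentIn Γᶜ z)ᶜ.eq_empty_or_nonempty with hempty | hne
  · have hΓ_empty : Γ = ∅ := Set.subset_empty_iff.1 (hempty ▸ hΓ)
    rw [hempty, hΓ_empty]
  refine (le_infDist hne).2 fun v hv => ?_
  by_contra! hlt
  have hball : ball w (infDist w Γ) ⊆ Γᶜ := fun u hu huΓ =>
    (infDist_le_dist_of_mem huΓ).not_gt (mem_ball'.1 hu)
  have hsub := (convex_ball w _).isPreconnected.subset_connectedComponentIn
    (mem_ball_self (dist_nonneg.trans_lt hlt)) hball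
  exact hv (connectedComponentIn_eq hw ▸ hsub (mem_ball'.2 hlt))

theorem nonempty_of_isBounded_connectedComponentIn_compl {E : Type*} [NormedAddCommGroup E]
    [NormedSpace ℝ E] [Nontrivial E] {Γ : Set E} {z : E}
    (hbdd : Bornology.IsBounded (connectedComponentIn Γᶜ z)) : Γ.Nonempty := by
  by_contra! hΓ
  rw [hΓ, Set.compl_empty, connectedComponentIn_univ,
    PreconnectedSpace.connectedComponent_eq_univ] at hbdd
  exact NormedSpace.unbounded_univ ℝ E hbdd

theorem BoundedTurning.hasCigars {Γ : Set ℂ} {C : ℝ} (hΓ : BoundedTurning C Γ) (hC : 0 ≤ C)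
    (hclosed : IsClosed Γ) {z : ℂ} (hbdd : Bornology.IsBounded (connectedComponentIn Γᶜ z)) :
    HasCigars (2 * C + 2) (connectedComponentIn Γᶜ z) := by
  have hne := nonempty_of_isBounded_connectedComponentIn_compl hbdd
  intro a ha b hb
  have hΓΩ : Disjoint Γ (connectedComponentIn Γᶜ z) :=
    Set.disjoint_right.2 (connectedComponentIn_subset _ _)
  let K : Set ℂ := {w | (2 * C + 2) * infDist w Γ ≤ min (dist w a) (dist w b)}
  have hK : IsClosed K :=
    isClosed_le (continuous_const.mul (continuous_infDist_pt _)) (by fun_prop)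
  have hnotMem {x} (hx : x ∈ connectedComponentIn Γᶜ z) (h : min (dist x a) (dist x b) ≤ 0) :
      x ∉ K := fun hxK => by
    have hpos : 0 < infDist x Γ :=
      (hclosed.notMem_iff_infDist_pos hne).1 (hΓΩ.notMem_of_mem_right hx)
    have : (2 * C + 2) * infDist x Γ ≤ 0 := hxK.out.trans h
    nlinarith
  have haK : a ∉ K := hnotMem ha ((min_le_left _ _).trans (dist_self a).le)
  have hbK : b ∉ K := hnotMem hb ((min_le_right _ _).trans (dist_self b).le)
  have hmin {w} (hw : w ∈ K) : 0 < min (dist w a) (dist w b) :=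
    lt_min (dist_pos.2 (ne_of_mem_of_not_mem hw haK)) (dist_pos.2 (ne_of_mem_of_not_mem hw hbK))
  have hΓK : Γ ⊆ K := fun w hw => by
    simp only [K, Set.mem_ofPred_eq, infDist_zero_of_mem hw, mul_zero]
    positivity
  have hsub : connectedComponentIn Kᶜ a ⊆ connectedComponentIn Γᶜ z :=
    connectedComponentIn_eq ha ▸ connectedComponentIn_mono a (Set.compl_subset_compl.2 hΓK)
  have hnear (w) (hw : w ∈ K) :
      ∃ p ∈ Γ, (2 * C + 1) * dist p w < min (dist w a) (dist w b) := by
    obtain ⟨p, hp, hwp⟩ := hclosed.exists_infDist_eq_dist hne w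
    have hwK : (2 * C + 2) * infDist w Γ ≤ min (dist w a) (dist w b) := hw
    refine ⟨p, hp, ?_⟩
    rw [dist_comm, ← hwp]
    nlinarith [hmin hw, infDist_nonneg (x := w) (s := Γ)]
  obtain ⟨L, hL, hLexp⟩ := exists_continuousOn_log_div hclosed
    isPreconnected_connectedComponentIn hΓΩ ha hb
  obtain ⟨g, hg, hgexp⟩ := hΓ.exists_continuousOn_log hC hL hLexp hnear
  refine ⟨connectedComponentIn Kᶜ a, hsub, isPreconnected_connectedComponentIn,
    mem_connectedComponentIn haK, mem_connectedComponentIn_of_continuousOn_log hK haK hbK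
      (hbdd.subset hsub) hg hgexp, fun w hw => ?_⟩
  have hwK : w ∉ K := connectedComponentIn_subset _ _ hw
  calc min (dist w a) (dist w b) ≤ (2 * C + 2) * infDist w Γ := (not_le.1 hwK).le
    _ ≤ _ := by gcongr; exact infDist_le_infDist_compl_connectedComponentIn (hsub hw)

theorem boundedTurning_image_of_diam_le {X : Type*} [PseudoMetricSpace X] {γ : ℝ → X} {C : ℝ}
    (hγ : Continuous γ) (hper : Function.Periodic γ 1)
    (hdiam : ∀ s t : ℝ, 0 ≤ s → s ≤ t → t ≤ 1 →
      min (diam (γ '' Set.Icc s t)) (diam (γ '' Set.Icc t (s + 1))) ≤ C * dist (γ s) (γ t)) :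
    BoundedTurning C (γ '' Set.Icc (0 : ℝ) 1) := by
  have hrange : γ '' Set.Icc (0 : ℝ) 1 = Set.range γ := by
    simpa only [zero_add] using hper.image_Icc one_pos 0
  have harc (u v : ℝ) {x y} (hx : x ∈ γ '' Set.Icc u v) (hy : y ∈ γ '' Set.Icc u v) :
      dist x y ≤ diam (γ '' Set.Icc u v) :=
    dist_le_diam_of_mem (isCompact_Icc.image hγ).isBounded hx hy
  have hordered (s t : ℝ) (hs : 0 ≤ s) (hst : s ≤ t) (ht : t ≤ 1) :
      ∃ S ⊆ γ '' Set.Icc (0 : ℝ) 1, IsPreconnected S ∧ γ s ∈ S ∧ γ t ∈ S ∧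
        ∀ x ∈ S, ∀ y ∈ S, dist x y ≤ C * dist (γ s) (γ t) := by
    rw [hrange]
    rcases min_le_iff.1 (hdiam s t hs hst ht) with h | h
    · exact ⟨γ '' Set.Icc s t, Set.image_subset_range _ _,
        isPreconnected_Icc.image _ hγ.continuousOn, ⟨s, ⟨le_rfl, hst⟩, rfl⟩,
        ⟨t, ⟨hst, le_rfl⟩, rfl⟩, fun x hx y hy => (harc _ _ hx hy).trans h⟩
    · exact ⟨γ '' Set.Icc t (s + 1), Set.image_subset_range _ _,
        isPreconnected_Icc.image _ hγ.continuousOn, ⟨s + 1, ⟨by linarith, le_rfl⟩, hper s⟩,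
        ⟨t, ⟨le_rfl, by linarith⟩, rfl⟩, fun x hx y hy => (harc _ _ hx hy).trans h⟩
  rintro _ ⟨s, hs, rfl⟩ _ ⟨t, ht, rfl⟩
  rcases le_total s t with hst | hts
  · obtain ⟨S, hSΓ, hS, hsS, htS, hdist⟩ := hordered s t hs.1 hst ht.2
    exact ⟨S, hSΓ, hS, hsS, htS, fun x hx => hdist x hx _ hsS⟩
  · obtain ⟨S, hSΓ, hS, htS, hsS, hdist⟩ := hordered t s ht.1 hts hs.2
    exact ⟨S, hSΓ, hS, hsS, htS, fun x hx => dist_comm (γ s) (γ t) ▸ hdist x hx _ hsS⟩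

/-! ### Cigars give carrots -/

/-- The John condition with centre `x₀`: every point of `Ω` can be joined to `x₀` inside a connected
part of `Ω` whose width grows linearly with the distance from the tip `x`. -/
def HasCarrots {X : Type*} [PseudoMetricSpace X] (B : ℝ) (Ω : Set X) (x₀ : X) : Prop :=
  ∀ x ∈ Ω, ∃ A ⊆ Ω, IsPreconnected A ∧ x ∈ A ∧ x₀ ∈ A ∧ ∀ w ∈ A, dist w x ≤ B * infDist w Ωᶜ

section Carrots

variable {X : Type*} [PseudoMetricSpace X] {Ω : Set X} {k : ℝ}

theorem exists_mem_isMaxOn_infDist_compl [ProperSpace X] (hΩ : IsOpen Ω) (hne : Ω.Nonempty)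
    (hcompl : Ωᶜ.Nonempty) (hbdd : Bornology.IsBounded Ω) :
    ∃ x₀ ∈ Ω, IsMaxOn (fun w => infDist w Ωᶜ) Ω x₀ := by
  obtain ⟨x₀, -, hmax⟩ := hbdd.isCompact_closure.exists_isMaxOn hne.closure
    (continuous_infDist_pt Ωᶜ).continuousOn
  obtain ⟨y, hy⟩ := hne
  have hpos : 0 < infDist x₀ Ωᶜ :=
    ((hΩ.isClosed_compl.notMem_iff_infDist_pos hcompl).1 (Set.notMem_compl_iff.2 hy)).trans_le
      (hmax (subset_closure hy))
  exact ⟨x₀, Set.notMem_compl_iff.1 ((hΩ.isClosed_compl.notMem_iff_infDist_pos hcompl).2 hpos),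
    hmax.on_subset subset_closure⟩

theorem HasCigars.dist_le (hΩ : HasCigars k Ω) (hk : 0 ≤ k) {T : ℝ}
    (hT : ∀ w ∈ Ω, infDist w Ωᶜ ≤ T) {a b : X} (ha : a ∈ Ω) (hb : b ∈ Ω) :
    dist a b ≤ 2 * k * T := by
  obtain ⟨A, hAΩ, hA, haA, hbA, hAw⟩ := hΩ a ha b hb
  obtain ⟨w, hw, hwab : dist w a = dist w b⟩ := hA.intermediate_value₂ haA hbA
    (f := fun w => dist w a) (g := fun w => dist w b) (by fun_prop) (by fun_prop)
    (by simp only [dist_self, dist_nonneg]) (by simp only [dist_self, dist_nonneg])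
  have hwa : dist w a ≤ k * T := by
    calc dist w a = min (dist w a) (dist w b) := by rw [← hwab, min_self]
      _ ≤ k * infDist w Ωᶜ := hAw w hw
      _ ≤ k * T := by gcongr; exact hT w (hAΩ hw)
  linarith [dist_triangle_left a b w]

theorem HasCigars.hasCarrots_of_isMaxOn (hΩ : HasCigars k Ω) (hk : 0 ≤ k) {x₀ : X} (hx₀ : x₀ ∈ Ω)
    (hmax : IsMaxOn (fun w => infDist w Ωᶜ) Ω x₀) : HasCarrots (2 * k * (k + 1)) Ω x₀ := by
  intro x hx
  obtain ⟨A, hAΩ, hA, hxA, hx₀A, hAw⟩ := hΩ x hx x₀ hx₀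
  refine ⟨A, hAΩ, hA, hxA, hx₀A, fun w hw => ?_⟩
  have hnonneg : 0 ≤ k * infDist w Ωᶜ := mul_nonneg hk infDist_nonneg
  rcases min_le_iff.1 (hAw w hw) with h | h
  · nlinarith
  · have hT : infDist x₀ Ωᶜ ≤ (k + 1) * infDist w Ωᶜ := by
      have := infDist_le_infDist_add_dist (s := Ωᶜ) (x := x₀) (y := w)
      rw [dist_comm] at this
      linarith
    calc dist w x ≤ 2 * k * infDist x₀ Ωᶜ := hΩ.dist_le hk hmax (hAΩ hw) hx
      _ ≤ 2 * k * ((k + 1) * infDist w Ωᶜ) := by gcongr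
      _ = 2 * k * (k + 1) * infDist w Ωᶜ := by ring

end Carrots

/-! ### Minimal chains of comparable balls -/

section Chains

/-- Points of `A` are adjacent when they are close on the scale `d` at both of them; walks in this
graph are chains of comparable, strongly overlapping balls of radii comparable to `d`. -/
def proximityGraph {X : Type*} [PseudoMetricSpace X] (d : X → ℝ) (A : Set X) : SimpleGraph A where
  Adj x y := x ≠ y ∧ dist (x : X) y ≤ min (d x) (d y) / 8
  symm := ⟨fun x y h => ⟨h.1.symm, by rw [dist_comm, min_comm]; exact h.2⟩⟩
  loopless := ⟨fun _ h => h.1 rfl⟩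

theorem dist_getVert_getVert_of_length_eq_dist {V : Type*} {G : SimpleGraph V} {u v : V}
    (p : G.Walk u v) (hp : p.length = G.dist u v) {i j : ℕ} (hij : i ≤ j) (hj : j ≤ p.length) :
    G.dist (p.getVert i) (p.getVert j) = j - i := by
  have hsub : ((p.take j).drop i).IsSubwalk p :=
    ((p.take j).isSubwalk_drop i).trans (p.isSubwalk_take j)
  have hlen := SimpleGraph.length_eq_dist_of_subwalk hp hsub
  rw [SimpleGraph.Walk.drop_length, SimpleGraph.Walk.take_length, SimpleGraph.Walk.take_getVert,
    min_eq_left hj, min_eq_right hij] at hlen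
  exact hlen.symm

variable {X : Type*} [PseudoMetricSpace X] {d : X → ℝ} {A : Set X}

theorem reachable_proximityGraph (hA : IsPreconnected A) (hd : ContinuousOn d A)
    (hpos : ∀ x ∈ A, 0 < d x) (x y : A) : (proximityGraph d A).Reachable x y := by
  have : PreconnectedSpace A := isPreconnected_iff_preconnectedSpace.1 hA
  have : Std.Symm (proximityGraph d A).Reachable := ⟨fun _ _ => SimpleGraph.Reachable.symm⟩
  refine PreconnectedSpace.induction₂ (proximityGraph d A).Reachable (fun x => ?_)
    ⟨fun _ _ _ => SimpleGraph.Reachable.trans⟩ x y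
  have hclose : ∀ᶠ y : A in nhds x, dist (x : X) y < min (d x) (d y) / 8 := by
    have hd' : Continuous fun y : A => d y := continuousOn_iff_continuous_domRestrict.1 hd
    refine (isOpen_lt (by fun_prop) ((continuous_const.min hd').div_const 8)).mem_nhds ?_
    simpa using hpos x x.2
  filter_upwards [hclose] with y hy
  rcases eq_or_ne x y with rfl | hxy
  · exact SimpleGraph.Reachable.refl x
  · exact SimpleGraph.Adj.reachable ⟨hxy, hy.le⟩

/-- The chain is a geodesic of the proximity graph. -/
theorem exists_minimal_chain (hA : IsPreconnected A) (hd : ContinuousOn d A)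
    (hpos : ∀ x ∈ A, 0 < d x) {x y : X} (hx : x ∈ A) (hy : y ∈ A) :
    ∃ (N : ℕ) (z : ℕ → X), z 0 = x ∧ z N = y ∧ (∀ i, z i ∈ A) ∧
      (∀ i < N, dist (z i) (z (i + 1)) ≤ min (d (z i)) (d (z (i + 1))) / 8) ∧
      ∀ i j, i + 2 ≤ j → j ≤ N → min (d (z i)) (d (z j)) / 8 < dist (z i) (z j) := by
  obtain ⟨p, hp⟩ :=
    (reachable_proximityGraph hA hd hpos ⟨x, hx⟩ ⟨y, hy⟩).exists_walk_length_eq_dist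
  refine ⟨p.length, fun i => p.getVert i, congrArg _ p.getVert_zero, congrArg _ p.getVert_length,
    fun i => (p.getVert i).2, fun i hi => (p.adj_getVert_succ hi).2, fun i j hij hj => ?_⟩
  have hdist := dist_getVert_getVert_of_length_eq_dist p hp (by omega : i ≤ j) hj
  by_contra! hle
  have hne : p.getVert i ≠ p.getVert j := fun h => by
    rw [h, SimpleGraph.dist_self] at hdist
    omega
  have hadj : (proximityGraph d A).Adj (p.getVert i) (p.getVert j) := ⟨hne, hle⟩
  have := SimpleGraph.dist_eq_one_iff_adj.2 hadj
  omega

end Chains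

section Packing

variable {E : Type*} [NormedAddCommGroup E] [NormedSpace ℝ E] [FiniteDimensional ℝ E]
  {ι : Type*} {z : ι → E}

theorem card_le_of_separated_of_dist_le {s : Finset ι} {y : E} {r R : ℝ} (hr : 0 < r) (hR : 0 ≤ R)
    (hsep : (s : Set ι).Pairwise fun i j => 2 * r ≤ dist (z i) (z j))
    (hz : ∀ i ∈ s, dist (z i) y ≤ R) :
    (s.card : ℝ) ≤ ((R + r) / r) ^ Module.finrank ℝ E := by
  borelize E
  let μ : Measure E := Measure.addHaar
  have hdisj : (s : Set ι).PairwiseDisjoint fun i => ball (z i) r := fun i hi j hj hij =>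
    ball_disjoint_ball (by linarith [hsep hi hj hij])
  have hsub : (⋃ i ∈ s, ball (z i) r) ⊆ ball y (R + r) :=
    Set.iUnion₂_subset fun i hi => ball_subset_ball' (by linarith [hz i hi])
  have hmeas := measure_mono (μ := μ) hsub
  rw [measure_biUnion_finset hdisj fun _ _ => measurableSet_ball] at hmeas
  simp only [μ.addHaar_ball_of_pos _ hr, μ.addHaar_ball_of_pos _ (by positivity : 0 < R + r),
    Finset.sum_const, nsmul_eq_mul, ← mul_assoc] at hmeas
  rw [ENNReal.mul_le_mul_iff_left (measure_ball_pos μ _ one_pos).ne' measure_ball_lt_top.ne,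
    ← ENNReal.ofReal_natCast, ← ENNReal.ofReal_mul (by positivity),
    ENNReal.ofReal_le_ofReal_iff (by positivity)] at hmeas
  rwa [div_pow, le_div_iff₀ (by positivity)]

theorem card_le_of_separated_of_dist_lt {d : E → ℝ} (hd : LipschitzWith 1 d) {s : Finset ι} {y : E}
    (hpos : ∀ i ∈ s, 0 < d (z i))
    (hsep : (s : Set ι).Pairwise fun i j => min (d (z i)) (d (z j)) / 8 < dist (z i) (z j))
    (hy : ∀ i ∈ s, dist y (z i) < d (z i) / 2) : (s.card : ℝ) ≤ 25 ^ Module.finrank ℝ E := by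
  rcases s.eq_empty_or_nonempty with rfl | ⟨i₀, hi₀⟩
  · simp only [Finset.card_empty, Nat.cast_zero]
    positivity
  have hupper (i) (hi : i ∈ s) : d (z i) < 2 * d y := by
    have := hd.le_add_mul (z i) y
    rw [dist_comm, NNReal.coe_one, one_mul] at this
    linarith [hy i hi]
  have hlower (i) (hi : i ∈ s) : d y < 3 / 2 * d (z i) := by
    have := hd.le_add_mul y (z i)
    rw [NNReal.coe_one, one_mul] at this
    linarith [hy i hi]
  have hdy : 0 < d y := by linarith [hpos i₀ hi₀, hupper i₀ hi₀]
  have hcard := card_le_of_separated_of_dist_le (z := z) (s := s) (y := y) (r := d y / 24)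
    (R := d y) (by positivity) hdy.le
    (fun i hi j hj hij => by
      have : 2 / 3 * d y ≤ min (d (z i)) (d (z j)) :=
        le_min (by linarith [hlower i hi]) (by linarith [hlower j hj])
      linarith [hsep hi hj hij])
    (fun i hi => by linarith [dist_comm y (z i), hy i hi, hupper i hi])
  rwa [show (d y + d y / 24) / (d y / 24) = 25 by field_simp; norm_num] at hcard

theorem card_le_of_minimal_chain {d : E → ℝ} (hd : LipschitzWith 1 d) {z : ℕ → E} {y : E}
    {I : Finset ℕ} (hpos : ∀ i ∈ I, 0 < d (z i))
    (hsep : ∀ i ∈ I, ∀ j ∈ I, i + 2 ≤ j → min (d (z i)) (d (z j)) / 8 < dist (z i) (z j))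
    (hy : ∀ i ∈ I, dist y (z i) < d (z i) / 2) : (I.card : ℝ) ≤ 2 * 25 ^ Module.finrank ℝ E := by
  have hparity {p : ℕ → Prop} [DecidablePred p] (hp : ∀ i j, p i → p j → i < j → i + 2 ≤ j) :
      ((I.filter p).card : ℝ) ≤ 25 ^ Module.finrank ℝ E := by
    refine card_le_of_separated_of_dist_lt hd (fun i hi => hpos i (Finset.mem_of_mem_filter i hi))
      (fun i hi j hj hij => ?_) (fun i hi => hy i (Finset.mem_of_mem_filter i hi))
    obtain ⟨hiI, hpi⟩ := Finset.mem_filter.1 (Finset.mem_coe.1 hi)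
    obtain ⟨hjI, hpj⟩ := Finset.mem_filter.1 (Finset.mem_coe.1 hj)
    rcases hij.lt_or_gt with h | h
    · exact hsep i hiI j hjI (hp i j hpi hpj h)
    · rw [dist_comm, min_comm]
      exact hsep j hjI i hiI (hp j i hpj hpi h)
  have heven := hparity (p := Even) (by rintro _ _ ⟨a, rfl⟩ ⟨b, rfl⟩ h; omega)
  have hodd := hparity (p := fun i => ¬ Even i) (by
    simp only [Nat.not_even_iff_odd]
    rintro _ _ ⟨a, rfl⟩ ⟨b, rfl⟩ h
    omega)
  rw [← Finset.card_filter_add_card_filter_not (s := I) Even]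
  push_cast
  linarith

end Packing

/-! ### Ball averages and the Riesz potential of the gradient -/

section BallAverages

open Module AffineMap

variable {E F : Type*} [NormedAddCommGroup E] [NormedSpace ℝ E] [NormedAddCommGroup F]
  [NormedSpace ℝ F] {f : E → F} {U : Set E}

theorem enorm_sub_le_lintegral_enorm_fderiv_lineMap (hU : IsOpen U) (hf : ContDiffOn ℝ 1 f U)
    {p q : E} (hpq : ∀ t ∈ Set.Icc (0 : ℝ) 1, lineMap p q t ∈ U) :
    ‖f p - f q‖ₑ ≤
      ∫⁻ t in Set.Icc (0 : ℝ) 1, ‖q - p‖ₑ * ‖fderiv ℝ f (lineMap p q t)‖ₑ := by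
  have hline : ContDiff ℝ 1 (lineMap p q : ℝ → E) := by
    simp only [funext (lineMap_apply_module' p q)]
    fun_prop
  have h := enorm_sub_le_lintegral_deriv_of_contDiffOn_Icc
    (hf.comp hline.contDiffOn hpq) zero_le_one
  simp only [Function.comp_apply, lineMap_apply_zero, lineMap_apply_one] at h
  rw [← enorm_neg, neg_sub]
  refine h.trans (setLIntegral_mono' measurableSet_Icc fun t ht => ?_)
  have hdf := ((hf.contDiffAt (hU.mem_nhds (hpq t ht))).differentiableAt one_ne_zero).hasFDerivAt
  rw [(hdf.comp_hasDerivAt t hasDerivAt_lineMap).deriv, mul_comm]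
  exact ContinuousLinearMap.le_opENorm _ _

theorem lineMap_add_smul (z w u : E) (ρ σ t : ℝ) :
    lineMap (z + ρ • u) (w + σ • u) t = lineMap z w t + (lineMap ρ σ t : ℝ) • u := by
  simp only [lineMap_apply_module', smul_eq_mul]
  module

theorem add_smul_mem_closedBall {u : E} (hu : u ∈ closedBall (0 : E) 1) (z : E) {ρ : ℝ}
    (hρ : 0 ≤ ρ) : z + ρ • u ∈ closedBall z ρ := by
  rw [mem_closedBall_zero_iff] at hu
  rw [mem_closedBall, dist_self_add_left, norm_smul, Real.norm_of_nonneg hρ]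
  exact mul_le_of_le_one_right hρ hu

theorem norm_add_smul_le_of_mem_ball (v : E) {u : E} (hu : u ∈ ball (0 : E) 1) (c : ℝ) :
    ‖v + c • u‖ ≤ ‖v‖ + |c| := by
  refine (norm_add_le _ _).trans ?_
  rw [norm_smul, Real.norm_eq_abs]
  gcongr
  exact mul_le_of_le_one_right (abs_nonneg c) (mem_ball_zero_iff.1 hu).le

theorem ball_lineMap_subset_of_convex (hconv : Convex ℝ U) {z w : E} {ρ σ t : ℝ} (hρ : 0 ≤ ρ)
    (hσ : 0 ≤ σ) (hz : closedBall z ρ ⊆ U) (hw : closedBall w σ ⊆ U) (ht : t ∈ Set.Icc (0 : ℝ) 1)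
    (hpos : (0 : ℝ) < lineMap ρ σ t) : ball (lineMap z w t) (lineMap ρ σ t) ⊆ U := by
  intro v hv
  set r : ℝ := lineMap ρ σ t with hr
  obtain ⟨u, hu⟩ : ∃ u, u = r⁻¹ • (v - lineMap z w t) := ⟨_, rfl⟩
  have hu1 : u ∈ closedBall (0 : E) 1 := by
    rw [mem_ball, dist_eq_norm] at hv
    rw [hu, mem_closedBall_zero_iff, norm_smul, norm_inv, Real.norm_of_nonneg hpos.le,
      inv_mul_le_one₀ hpos]
    exact hv.le
  have hvu : v = lineMap (z + ρ • u) (w + σ • u) t := by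
    rw [lineMap_add_smul, ← hr, hu, smul_inv_smul₀ hpos.ne', add_sub_cancel]
  rw [hvu]
  exact hconv.lineMap_mem (hz (add_smul_mem_closedBall hu1 z hρ))
    (hw (add_smul_mem_closedBall hu1 w hσ)) ht

variable [MeasurableSpace E] [FiniteDimensional ℝ E] [CompleteSpace F]
  (μ : Measure E) [μ.IsAddHaarMeasure]

/-- The average of `f` over the ball of centre `z` and radius `ρ`, written on the unit ball so that
it depends continuously on `ρ` down to `ρ = 0`, where it is `f z`. -/
noncomputable def ballAverage (f : E → F) (z : E) (ρ : ℝ) : F :=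
  ⨍ u in ball (0 : E) 1, f (z + ρ • u) ∂μ

theorem ballAverage_zero (f : E → F) (z : E) : ballAverage μ f z 0 = f z := by
  simp only [ballAverage, zero_smul, add_zero]
  exact setAverage_const (measure_ball_pos μ 0 one_pos).ne' measure_ball_lt_top.ne _

variable [BorelSpace E]

/-- Average the fundamental theorem of calculus over the segments joining corresponding points of
the two balls. -/
theorem enorm_ballAverage_sub_ballAverage_le (hU : IsOpen U) (hconv : Convex ℝ U)
    (hf : ContDiffOn ℝ 1 f U) {z w : E} {ρ σ : ℝ} (hρ : 0 ≤ ρ) (hσ : 0 ≤ σ)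
    (hz : closedBall z ρ ⊆ U) (hw : closedBall w σ ⊆ U) :
    ‖ballAverage μ f z ρ - ballAverage μ f w σ‖ₑ ≤ (μ (ball 0 1))⁻¹ *
      ∫⁻ t in Set.Icc (0 : ℝ) 1, ∫⁻ u in ball (0 : E) 1, ‖w - z + (σ - ρ) • u‖ₑ *
        ‖fderiv ℝ f (lineMap z w t + (lineMap ρ σ t : ℝ) • u)‖ₑ ∂μ := by
  have hint : ∀ {z : E} {ρ : ℝ}, 0 ≤ ρ → closedBall z ρ ⊆ U →
      IntegrableOn (fun u => f (z + ρ • u)) (ball (0 : E) 1) μ := fun hρ hsub =>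
    ((hf.continuousOn.comp (by fun_prop) fun u hu =>
      hsub (add_smul_mem_closedBall hu _ hρ)).integrableOn_compact
        (isCompact_closedBall _ _)).mono_set ball_subset_closedBall
  have hFTC : ∀ u ∈ ball (0 : E) 1, ‖f (z + ρ • u) - f (w + σ • u)‖ₑ ≤
      ∫⁻ t in Set.Icc (0 : ℝ) 1, ‖w - z + (σ - ρ) • u‖ₑ *
        ‖fderiv ℝ f (lineMap z w t + (lineMap ρ σ t : ℝ) • u)‖ₑ := by
    intro u hu
    have hu := ball_subset_closedBall hu
    refine (enorm_sub_le_lintegral_enorm_fderiv_lineMap hU hf fun t ht =>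
      hconv.lineMap_mem (hz (add_smul_mem_closedBall hu z hρ))
        (hw (add_smul_mem_closedBall hu w hσ)) ht).trans_eq ?_
    simp only [lineMap_add_smul, show w + σ • u - (z + ρ • u) = w - z + (σ - ρ) • u by module]
  have hmeas : Measurable fun p : ℝ × E => ‖w - z + (σ - ρ) • p.2‖ₑ *
      ‖fderiv ℝ f (lineMap z w p.1 + (lineMap ρ σ p.1 : ℝ) • p.2)‖ₑ := by
    simp only [lineMap_apply_module']
    exact Measurable.mul (by fun_prop) ((measurable_fderiv ℝ f).comp (by fun_prop)).enorm
  rw [lintegral_lintegral_swap hmeas.aemeasurable, ballAverage, ballAverage, average, average,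
    ← integral_sub (hint hρ hz).to_average (hint hσ hw).to_average]
  refine (enorm_integral_le_lintegral_enorm _).trans ?_
  rw [lintegral_smul_measure, Measure.restrict_apply_univ, smul_eq_mul]
  exact mul_le_mul_right (setLIntegral_mono' measurableSet_ball hFTC) _

theorem setLIntegral_ball_comp_add_smul (G : E → ℝ≥0∞) (x : E) {r : ℝ} (hr : 0 < r) :
    ∫⁻ u in ball (0 : E) 1, G (x + r • u) ∂μ =
      ENNReal.ofReal (r⁻¹ ^ finrank ℝ E) * ∫⁻ v in ball x r, G v ∂μ := by
  let e : E ≃ₜ E := (Homeomorph.smulOfNeZero r hr.ne').trans (Homeomorph.addLeft x)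
  have hmap : μ.map e = ENNReal.ofReal (r⁻¹ ^ finrank ℝ E) • μ := by
    have hcomp : ⇑e = (x + ·) ∘ (r • ·) := rfl
    rw [hcomp, ← Measure.map_map (measurable_const_add x) (measurable_const_smul r),
      Measure.map_addHaar_smul μ hr.ne', Measure.map_smul, map_add_left_eq_self, inv_pow,
      abs_of_nonneg (by positivity)]
  have hpre : e ⁻¹' ball x r = ball 0 1 := by
    ext u
    simp [e, norm_smul, abs_of_pos hr, hr]
  rw [← smul_eq_mul, ← lintegral_smul_measure, ← Measure.restrict_smul, ← hmap,
    e.measurableEmbedding.restrict_map, e.measurableEmbedding.lintegral_map, hpre]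
  rfl

/-- The balls interpolating between the two given ones have radius at least `s`, so rescaling them
to the unit ball costs at most a factor `s⁻ⁿ`. -/
theorem enorm_ballAverage_sub_ballAverage_le_setLIntegral (hU : IsOpen U) (hconv : Convex ℝ U)
    (hf : ContDiffOn ℝ 1 f U) {z w : E} {ρ σ s L : ℝ} (hs : 0 < s) (hρ : s ≤ ρ) (hσ : s ≤ σ)
    (hz : closedBall z ρ ⊆ U) (hw : closedBall w σ ⊆ U) (hL : dist z w + |σ - ρ| ≤ L) :
    ‖ballAverage μ f z ρ - ballAverage μ f w σ‖ₑ ≤ (μ (ball 0 1))⁻¹ *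
      (ENNReal.ofReal (L * s⁻¹ ^ finrank ℝ E) * ∫⁻ v in U, ‖fderiv ℝ f v‖ₑ ∂μ) := by
  have hρ0 := hs.le.trans hρ
  have hσ0 := hs.le.trans hσ
  have hL0 : 0 ≤ L := le_trans (by positivity) hL
  refine (enorm_ballAverage_sub_ballAverage_le μ hU hconv hf hρ0 hσ0 hz hw).trans
    (mul_le_mul_right ?_ _)
  have hslice : ∀ t ∈ Set.Icc (0 : ℝ) 1, ∫⁻ u in ball (0 : E) 1, ‖w - z + (σ - ρ) • u‖ₑ *
      ‖fderiv ℝ f (lineMap z w t + (lineMap ρ σ t : ℝ) • u)‖ₑ ∂μ ≤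
        ENNReal.ofReal (L * s⁻¹ ^ finrank ℝ E) * ∫⁻ v in U, ‖fderiv ℝ f v‖ₑ ∂μ := by
    intro t ht
    have hsr : s ≤ lineMap ρ σ t := (convex_Ici s).lineMap_mem hρ hσ ht
    have hball := ball_lineMap_subset_of_convex hconv hρ0 hσ0 hz hw ht (hs.trans_le hsr)
    set r : ℝ := lineMap ρ σ t
    have hr : 0 < r := hs.trans_le hsr
    calc
      _ ≤ ∫⁻ u in ball (0 : E) 1, ENNReal.ofReal L *
          ‖fderiv ℝ f (lineMap z w t + r • u)‖ₑ ∂μ := by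
        refine setLIntegral_mono' measurableSet_ball fun u hu => ?_
        gcongr
        rw [← ofReal_norm]
        rw [dist_comm, dist_eq_norm] at hL
        exact ENNReal.ofReal_le_ofReal ((norm_add_smul_le_of_mem_ball _ hu _).trans hL)
      _ = ENNReal.ofReal (L * r⁻¹ ^ finrank ℝ E) *
          ∫⁻ v in ball (lineMap z w t) r, ‖fderiv ℝ f v‖ₑ ∂μ := by
        rw [lintegral_const_mul' _ _ ENNReal.ofReal_ne_top,
          setLIntegral_ball_comp_add_smul μ (fun v => ‖fderiv ℝ f v‖ₑ) _ hr, ← mul_assoc,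
          ENNReal.ofReal_mul hL0]
      _ ≤ _ := by gcongr
  refine (setLIntegral_mono' measurableSet_Icc hslice).trans_eq ?_
  simp

end BallAverages

theorem lintegral_Ioi_inv_pow_succ {n : ℕ} (hn : n ≠ 0) {s : ℝ} (hs : 0 < s) :
    ∫⁻ t in Set.Ioi s, ENNReal.ofReal (t⁻¹ ^ (n + 1)) = ENNReal.ofReal (s⁻¹ ^ n / n) := by
  have hrpow : ∀ {t : ℝ}, 0 < t → ∀ m : ℕ, t⁻¹ ^ m = t ^ (-m : ℝ) := fun ht m => by
    rw [Real.rpow_neg ht.le, Real.rpow_natCast, inv_pow]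
  have hn' : (0 : ℝ) < n := by positivity
  have hexp : (-(n + 1 : ℕ) : ℝ) < -1 := by push_cast; linarith
  calc
    _ = ∫⁻ t in Set.Ioi s, ENNReal.ofReal (t ^ (-(n + 1 : ℕ) : ℝ)) :=
      setLIntegral_congr_fun measurableSet_Ioi fun t ht => by
        rw [← hrpow (hs.trans ht)]
    _ = ENNReal.ofReal (∫ t in Set.Ioi s, t ^ (-(n + 1 : ℕ) : ℝ)) := by
      refine (ofReal_integral_eq_lintegral_ofReal (integrableOn_Ioi_rpow_of_lt hexp hs) ?_).symm
      filter_upwards [ae_restrict_mem measurableSet_Ioi] with t ht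
      exact Real.rpow_nonneg (hs.trans ht).le _
    _ = ENNReal.ofReal (s⁻¹ ^ n / n) := by
      rw [integral_Ioi_rpow_of_lt hexp hs, hrpow hs]
      congr 1
      push_cast
      rw [show -((n : ℝ) + 1) + 1 = -n by ring, neg_div_neg_eq]

theorem pow_mul_inv_pow_sub_one {n : ℕ} (hn : n ≠ 0) {R : ℝ} (hR : R ≠ 0) :
    R ^ n * R⁻¹ ^ (n - 1) = R := by
  rw [← pow_sub_one_mul hn R, mul_right_comm, ← mul_pow, mul_inv_cancel₀ hR, one_pow, one_mul]

section RieszKernel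

open Module

variable {E : Type*} [NormedAddCommGroup E] [NormedSpace ℝ E]

/-- The kernel `|x - v|^(1 - n)`, `n = dim E`, of the Riesz potential of order one. -/
noncomputable def rieszKernel (x v : E) : ℝ :=
  (dist x v)⁻¹ ^ (finrank ℝ E - 1)

theorem rieszKernel_comm (x v : E) : rieszKernel x v = rieszKernel v x := by
  rw [rieszKernel, rieszKernel, dist_comm]

variable [MeasurableSpace E] [BorelSpace E] [FiniteDimensional ℝ E]

theorem measurable_rieszKernel : Measurable fun p : E × E => rieszKernel p.1 p.2 := by
  unfold rieszKernel
  fun_prop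

variable (μ : Measure E) [μ.IsAddHaarMeasure]

theorem lintegral_ball_enorm_smul_mul_le {G : E → ℝ≥0∞} (hG : Measurable G) (x : E) {σ t : ℝ}
    (hσ : 0 < σ) (ht : t ∈ Set.Ioc (0 : ℝ) 1) :
    ∫⁻ u in ball (0 : E) 1, ‖σ • u‖ₑ * G (x + (t * σ) • u) ∂μ ≤
      ∫⁻ v in ball x σ, (Set.Ioi (dist x v / σ)).indicator
        (fun t => ENNReal.ofReal (t⁻¹ ^ (finrank ℝ E + 1))) t *
          (ENNReal.ofReal (σ⁻¹ ^ finrank ℝ E * dist x v) * G v) ∂μ := by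
  have ht0 := ht.1
  have htσ : 0 < t * σ := mul_pos ht0 hσ
  have hscale : ∀ u : E, ‖σ • u‖ₑ * G (x + (t * σ) • u) =
      ENNReal.ofReal (dist x (x + (t * σ) • u) / t) * G (x + (t * σ) • u) := fun u => by
    rw [← ofReal_norm, dist_self_add_right, mul_smul, norm_smul t, Real.norm_of_nonneg ht0.le,
      mul_div_cancel_left₀ _ ht0.ne']
  simp only [hscale]
  rw [setLIntegral_ball_comp_add_smul μ (fun v => ENNReal.ofReal (dist x v / t) * G v) x htσ,
    ← lintegral_const_mul _ (by fun_prop)]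
  refine le_trans (setLIntegral_mono' measurableSet_ball fun v hv => ?_)
    (lintegral_mono_set (ball_subset_ball (mul_le_of_le_one_left hσ.le ht.2)))
  have hmem : t ∈ Set.Ioi (dist x v / σ) := by
    rw [Set.mem_Ioi, div_lt_iff₀ hσ, dist_comm]
    exact hv
  rw [Set.indicator_of_mem hmem, ← mul_assoc, ← mul_assoc,
    ← ENNReal.ofReal_mul (by positivity), ← ENNReal.ofReal_mul (by positivity)]
  refine le_of_eq (congrArg (ENNReal.ofReal · * G v) ?_)
  rw [mul_inv, mul_pow, div_eq_mul_inv, pow_succ]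
  ring

/-- The polar change of variables `v = x + t σ u`, carried out by scaling and Tonelli. -/
theorem lintegral_lintegral_ball_enorm_smul_mul_le [Nontrivial E] {G : E → ℝ≥0∞}
    (hG : Measurable G) (x : E) {σ : ℝ} (hσ : 0 < σ) :
    ∫⁻ t in Set.Ioc (0 : ℝ) 1, ∫⁻ u in ball (0 : E) 1, ‖σ • u‖ₑ * G (x + (t * σ) • u) ∂μ ≤
      ∫⁻ v in ball x σ, ENNReal.ofReal (rieszKernel x v) * G v ∂μ := by
  have hn : finrank ℝ E ≠ 0 := finrank_pos.ne'
  set W : E → ℝ≥0∞ := fun v => ENNReal.ofReal (σ⁻¹ ^ finrank ℝ E * dist x v) * G v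
  set T : ℝ → ℝ≥0∞ := fun t => ENNReal.ofReal (t⁻¹ ^ (finrank ℝ E + 1))
  have hmeas : Measurable fun p : ℝ × E => (Set.Ioi (dist x p.2 / σ)).indicator T p.1 * W p.2 := by
    have hind : Measurable ({p : ℝ × E | dist x p.2 / σ < p.1}.indicator fun p => T p.1) :=
      Measurable.indicator (by fun_prop) (measurableSet_lt (by fun_prop) (by fun_prop))
    exact hind.mul (by fun_prop)
  refine (setLIntegral_mono' measurableSet_Ioc fun t ht =>
    lintegral_ball_enorm_smul_mul_le μ hG x hσ ht).trans ?_
  rw [lintegral_lintegral_swap hmeas.aemeasurable]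
  refine setLIntegral_mono' measurableSet_ball fun v _ => ?_
  rcases eq_or_ne x v with rfl | hxv
  · simp
  have hδ : 0 < dist x v := dist_pos.2 hxv
  calc
    _ ≤ ∫⁻ t, (Set.Ioi (dist x v / σ)).indicator T t * W v := setLIntegral_le_lintegral _ _
    _ = ENNReal.ofReal ((dist x v / σ)⁻¹ ^ finrank ℝ E / finrank ℝ E) * W v := by
      rw [lintegral_mul_const _ (Measurable.indicator (by fun_prop) measurableSet_Ioi),
        lintegral_indicator measurableSet_Ioi, lintegral_Ioi_inv_pow_succ hn (div_pos hδ hσ)]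
    _ ≤ ENNReal.ofReal (rieszKernel x v) * G v := by
      rw [← mul_assoc, ← ENNReal.ofReal_mul (by positivity)]
      gcongr
      obtain ⟨m, hm⟩ := Nat.exists_eq_succ_of_ne_zero hn
      rw [rieszKernel, hm, Nat.succ_sub_one]
      calc (dist x v / σ)⁻¹ ^ m.succ / m.succ * (σ⁻¹ ^ m.succ * dist x v)
          = (dist x v)⁻¹ ^ m / m.succ := by
            rw [inv_div, div_pow, inv_pow, inv_pow, pow_succ (dist x v)]
            field_simp
        _ ≤ (dist x v)⁻¹ ^ m := div_le_self (by positivity) (by simp)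

theorem enorm_sub_ballAverage_self_le [Nontrivial E] {F : Type*} [NormedAddCommGroup F]
    [NormedSpace ℝ F] [CompleteSpace F] {f : E → F} {U : Set E} (hU : IsOpen U)
    (hconv : Convex ℝ U) (hf : ContDiffOn ℝ 1 f U) {x : E} {σ : ℝ} (hσ : 0 < σ)
    (hsub : closedBall x σ ⊆ U) :
    ‖f x - ballAverage μ f x σ‖ₑ ≤ (μ (ball 0 1))⁻¹ *
      ∫⁻ v in ball x σ, ENNReal.ofReal (rieszKernel x v) * ‖fderiv ℝ f v‖ₑ ∂μ := by
  have hx : closedBall x 0 ⊆ U := (closedBall_subset_closedBall hσ.le).trans hsub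
  have h := enorm_ballAverage_sub_ballAverage_le μ hU hconv hf le_rfl hσ.le hx hsub
  simp only [ballAverage_zero, sub_self, zero_add, sub_zero, AffineMap.lineMap_same_apply,
    AffineMap.lineMap_apply_module', add_zero, smul_eq_mul] at h
  rw [← restrict_Ioc_eq_restrict_Icc] at h
  exact h.trans (mul_le_mul_right (lintegral_lintegral_ball_enorm_smul_mul_le μ
    (measurable_fderiv ℝ f).enorm x hσ) _)

theorem setLIntegral_ball_inv_norm_pow [Nontrivial E] :
    ∫⁻ u in ball (0 : E) 1, ENNReal.ofReal (‖u‖⁻¹ ^ (finrank ℝ E - 1)) ∂μ =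
      finrank ℝ E * μ (ball 0 1) := by
  let φ : ℝ → ℝ := (Set.Iio 1).indicator fun r => r⁻¹ ^ (finrank ℝ E - 1)
  have hball : (fun u : E => φ ‖u‖) =
      (ball 0 1).indicator fun u => ‖u‖⁻¹ ^ (finrank ℝ E - 1) := by
    ext u
    by_cases hu : ‖u‖ < 1 <;> simp [φ, hu]
  have hradial : Set.EqOn (fun r => r ^ (finrank ℝ E - 1) • φ r) ((Set.Iio 1).indicator 1)
      (Set.Ioi 0) := fun r (hr : 0 < r) => by
    by_cases hr1 : r < 1 <;> simp [φ, hr1, hr.ne']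
  have hint : IntegrableOn (fun u : E => ‖u‖⁻¹ ^ (finrank ℝ E - 1)) (ball 0 1) μ := by
    refine (integrableOn_fun_norm_addHaar μ (f := fun r => r⁻¹ ^ (finrank ℝ E - 1))).2 ?_
    refine (integrableOn_const (C := (1 : ℝ)) (by simp)).congr_fun (fun r hr => ?_)
      measurableSet_Ioo
    simp [hr.1.ne']
  have hval : ∫ u in ball (0 : E) 1, ‖u‖⁻¹ ^ (finrank ℝ E - 1) ∂μ =
      finrank ℝ E * μ.real (ball 0 1) := by
    rw [← integral_indicator measurableSet_ball, ← hball, integral_fun_norm_addHaar,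
      setIntegral_congr_fun measurableSet_Ioi hradial, setIntegral_indicator measurableSet_Iio,
      Set.Ioi_inter_Iio]
    simp
  rw [← ofReal_integral_eq_lintegral_ofReal hint (ae_of_all _ fun u => by positivity), hval,
    ENNReal.ofReal_mul (by positivity), ENNReal.ofReal_natCast,
    ofReal_measureReal measure_ball_lt_top.ne]

theorem setLIntegral_ball_rieszKernel [Nontrivial E] (x : E) {R : ℝ} (hR : 0 < R) :
    ∫⁻ v in ball x R, ENNReal.ofReal (rieszKernel x v) ∂μ =
      finrank ℝ E * μ (ball 0 1) * ENNReal.ofReal R := by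
  have hscale : ∀ u : E, ENNReal.ofReal (rieszKernel x (x + R • u)) =
      ENNReal.ofReal (R⁻¹ ^ (finrank ℝ E - 1)) *
        ENNReal.ofReal (‖u‖⁻¹ ^ (finrank ℝ E - 1)) := fun u => by
    rw [rieszKernel, dist_self_add_right, norm_smul, Real.norm_of_nonneg hR.le, mul_inv, mul_pow,
      ENNReal.ofReal_mul (by positivity)]
  have hcov := setLIntegral_ball_comp_add_smul μ (fun v => ENNReal.ofReal (rieszKernel x v)) x hR
  simp only [hscale] at hcov
  rw [lintegral_const_mul' _ _ ENNReal.ofReal_ne_top, setLIntegral_ball_inv_norm_pow] at hcov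
  have hcancel : ENNReal.ofReal (R ^ finrank ℝ E) * ENNReal.ofReal (R⁻¹ ^ finrank ℝ E) = 1 := by
    rw [← ENNReal.ofReal_mul (by positivity), ← mul_pow, mul_inv_cancel₀ hR.ne', one_pow,
      ENNReal.ofReal_one]
  rw [← one_mul (lintegral _ _), ← hcancel, mul_assoc, ← hcov, ← mul_assoc,
    ← ENNReal.ofReal_mul (by positivity), pow_mul_inv_pow_sub_one finrank_pos.ne' hR.ne', mul_comm]

/-- The kernel is at most `R^(1 - n)` off `ball x R`. -/
theorem setLIntegral_rieszKernel_le [Nontrivial E] (x : E) (Ω : Set E) {R : ℝ} (hR : 0 < R)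
    (hΩ : μ Ω ≤ ENNReal.ofReal (R ^ finrank ℝ E)) :
    ∫⁻ v in Ω, ENNReal.ofReal (rieszKernel x v) ∂μ ≤
      (finrank ℝ E * μ (ball 0 1) + 1) * ENNReal.ofReal R := by
  rw [← lintegral_inter_add_sdiff _ Ω (measurableSet_ball (x := x) (ε := R)), add_mul, one_mul]
  gcongr
  · exact (lintegral_mono_set Set.inter_subset_right).trans_eq
      (setLIntegral_ball_rieszKernel μ x hR)
  · calc
      _ ≤ ∫⁻ _ in Ω \ ball x R, ENNReal.ofReal (R⁻¹ ^ (finrank ℝ E - 1)) ∂μ := by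
        refine setLIntegral_mono measurable_const fun v hv => ?_
        have hRv : R ≤ dist x v := by simpa [dist_comm] using hv.2
        unfold rieszKernel
        gcongr
      _ ≤ ENNReal.ofReal (R⁻¹ ^ (finrank ℝ E - 1)) * ENNReal.ofReal (R ^ finrank ℝ E) := by
        rw [setLIntegral_const]
        gcongr
        exact (measure_mono Set.sdiff_subset).trans hΩ
      _ = ENNReal.ofReal R := by
        rw [← ENNReal.ofReal_mul (by positivity), mul_comm,
          pow_mul_inv_pow_sub_one finrank_pos.ne' hR.ne']

end RieszKernel

/-! ### The Poincaré inequality on carrot domains -/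

section CarrotChains

open Module

variable {E F : Type*} [NormedAddCommGroup E] [NormedSpace ℝ E] [FiniteDimensional ℝ E]

theorem sum_indicator_ball_le_rieszKernel {d : E → ℝ} (hd : LipschitzWith 1 d) {x v : E}
    (hxv : x ≠ v) {B : ℝ} {N : ℕ} {z : ℕ → E} (hpos : ∀ i, 0 < d (z i))
    (hsep : ∀ i j, i + 2 ≤ j → j ≤ N → min (d (z i)) (d (z j)) / 8 < dist (z i) (z j))
    (hB : ∀ i, dist (z i) x ≤ B * d (z i)) :
    ∑ i ∈ Finset.range N, (ball (z i) (d (z i) / 2)).indicator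
        (fun _ => (d (z i) / 5)⁻¹ ^ (finrank ℝ E - 1)) v ≤
      2 * 25 ^ finrank ℝ E * (5 * (B + 1)) ^ (finrank ℝ E - 1) * rieszKernel x v := by
  classical
  have hB0 : 0 ≤ B := nonneg_of_mul_nonneg_left (dist_nonneg.trans (hB 0)) (hpos 0)
  have hxv' : 0 < dist x v := dist_pos.2 hxv
  set I := (Finset.range N).filter fun i => v ∈ ball (z i) (d (z i) / 2) with hI
  have hIN {i} (hi : i ∈ I) : i ≤ N := (Finset.mem_range.1 (Finset.mem_filter.1 hi).1).le
  have hIv {i} (hi : i ∈ I) : dist v (z i) < d (z i) / 2 := (Finset.mem_filter.1 hi).2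
  have hcard : (I.card : ℝ) ≤ 2 * 25 ^ finrank ℝ E :=
    card_le_of_minimal_chain hd (fun i _ => hpos i)
      (fun i _ j hj hij => hsep i j hij (hIN hj)) fun i hi => hIv hi
  have hterm : ∀ i ∈ I, (d (z i) / 5)⁻¹ ^ (finrank ℝ E - 1) ≤
      (5 * (B + 1)) ^ (finrank ℝ E - 1) * rieszKernel x v := fun i hi => by
    have hvx : dist x v ≤ (B + 1) * d (z i) := by
      have := dist_triangle_left x v (z i)
      rw [dist_comm (z i) v] at this
      linarith [hB i, hIv hi, hpos i]
    rw [rieszKernel, ← mul_pow, inv_div, ← div_eq_mul_inv]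
    have := hpos i
    refine pow_le_pow_left₀ (by positivity) ?_ _
    rw [div_le_div_iff₀ (hpos i) hxv']
    linarith
  calc
    _ = ∑ i ∈ I, (d (z i) / 5)⁻¹ ^ (finrank ℝ E - 1) := by
      rw [hI, Finset.sum_filter]
      exact Finset.sum_congr rfl fun i _ => Set.indicator_apply _ _ _
    _ ≤ I.card * ((5 * (B + 1)) ^ (finrank ℝ E - 1) * rieszKernel x v) :=
      (Finset.sum_le_card_nsmul _ _ _ hterm).trans_eq (nsmul_eq_mul _ _)
    _ ≤ _ := by
      rw [mul_assoc (2 * _)]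
      have : 0 ≤ rieszKernel x v := by unfold rieszKernel; positivity
      gcongr

variable [MeasurableSpace E] [BorelSpace E] (μ : Measure E) [μ.IsAddHaarMeasure]
  [NormedAddCommGroup F] [NormedSpace ℝ F] [CompleteSpace F] {f : E → F}

theorem enorm_ballAverage_sub_ballAverage_le_of_dist_le [Nontrivial E] {z w : E} {r r' : ℝ}
    (hr : 0 < r) (hf : ContDiffOn ℝ 1 f (ball z (r / 2))) (hzw : dist z w ≤ r / 8)
    (hr' : |r' - r| ≤ r / 8) :
    ‖ballAverage μ f z (r / 4) - ballAverage μ f w (r' / 4)‖ₑ ≤ (μ (ball 0 1))⁻¹ *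
      (ENNReal.ofReal ((r / 5)⁻¹ ^ (finrank ℝ E - 1)) *
        ∫⁻ v in ball z (r / 2), ‖fderiv ℝ f v‖ₑ ∂μ) := by
  obtain ⟨hlower, hupper⟩ := abs_le.1 hr'
  have hw : closedBall w (r' / 4) ⊆ ball z (r / 2) := fun u hu => by
    have := dist_triangle_right u z w
    rw [mem_closedBall] at hu
    rw [mem_ball]
    linarith
  have hL : dist z w + |r' / 4 - r / 4| ≤ r / 5 := by
    rw [← sub_div, abs_div, abs_of_pos (four_pos : (0 : ℝ) < 4)]
    linarith
  have hpow : r / 5 * (r / 5)⁻¹ ^ finrank ℝ E = (r / 5)⁻¹ ^ (finrank ℝ E - 1) := by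
    rw [← mul_pow_sub_one finrank_pos.ne' (r / 5)⁻¹, mul_inv_cancel_left₀ (by positivity)]
  rw [← hpow]
  exact enorm_ballAverage_sub_ballAverage_le_setLIntegral μ isOpen_ball (convex_ball z _) hf
    (by positivity) (by linarith) (by linarith) (closedBall_subset_ball (by linarith)) hw hL

theorem enorm_ballAverage_sub_ballAverage_le_of_chain [Nontrivial E] {Ω : Set E}
    (hf : ContDiffOn ℝ 1 f Ω) {d : E → ℝ} (hd : LipschitzWith 1 d) {N : ℕ} {z : ℕ → E}
    (hpos : ∀ i, 0 < d (z i)) (hball : ∀ i, ball (z i) (d (z i) / 2) ⊆ Ω)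
    (hstep : ∀ i < N, dist (z i) (z (i + 1)) ≤ d (z i) / 8) :
    ‖ballAverage μ f (z 0) (d (z 0) / 4) - ballAverage μ f (z N) (d (z N) / 4)‖ₑ ≤
      (μ (ball 0 1))⁻¹ * ∫⁻ v in Ω, ENNReal.ofReal (∑ i ∈ Finset.range N,
        (ball (z i) (d (z i) / 2)).indicator (fun _ => (d (z i) / 5)⁻¹ ^ (finrank ℝ E - 1)) v) *
          ‖fderiv ℝ f v‖ₑ ∂μ := by
  have hg : Measurable fun v => ‖fderiv ℝ f v‖ₑ := (measurable_fderiv ℝ f).enorm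
  set φ : ℕ → E → ℝ := fun i => (ball (z i) (d (z i) / 2)).indicator
    fun _ => (d (z i) / 5)⁻¹ ^ (finrank ℝ E - 1) with hφ
  have hφ0 (i v) : 0 ≤ φ i v := Set.indicator_nonneg (fun _ _ => by have := hpos i; positivity) v
  have hφm (i) : Measurable fun v => ENNReal.ofReal (φ i v) * ‖fderiv ℝ f v‖ₑ :=
    (measurable_const.indicator measurableSet_ball).ennreal_ofReal.mul hg
  have hlink : ∀ i ∈ Finset.range N,
      ‖ballAverage μ f (z i) (d (z i) / 4) - ballAverage μ f (z (i + 1)) (d (z (i + 1)) / 4)‖ₑ ≤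
        (μ (ball 0 1))⁻¹ * ∫⁻ v in Ω, ENNReal.ofReal (φ i v) * ‖fderiv ℝ f v‖ₑ ∂μ := by
    intro i hi
    have hdist := hstep i (Finset.mem_range.1 hi)
    have hdi : |d (z (i + 1)) - d (z i)| ≤ d (z i) / 8 := by
      have := hd.dist_le_mul (z i) (z (i + 1))
      rw [dist_comm, Real.dist_eq, NNReal.coe_one, one_mul] at this
      exact this.trans hdist
    refine (enorm_ballAverage_sub_ballAverage_le_of_dist_le μ (hpos i) (hf.mono (hball i))
      hdist hdi).trans_eq ?_
    rw [← lintegral_const_mul _ hg, ← Set.inter_eq_left.2 (hball i),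
      ← setLIntegral_indicator measurableSet_ball]
    congr! 3 with v
    by_cases hv : v ∈ ball (z i) (d (z i) / 2) <;> simp [hφ, hv]
  have hsum (v) : ENNReal.ofReal (∑ i ∈ Finset.range N, φ i v) =
      ∑ i ∈ Finset.range N, ENNReal.ofReal (φ i v) :=
    ENNReal.ofReal_sum_of_nonneg fun i _ => hφ0 i v
  calc
    _ ≤ ∑ i ∈ Finset.range N, (μ (ball 0 1))⁻¹ *
          ∫⁻ v in Ω, ENNReal.ofReal (φ i v) * ‖fderiv ℝ f v‖ₑ ∂μ := by
      rw [← Finset.sum_range_sub' fun i => ballAverage μ f (z i) (d (z i) / 4)]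
      exact (enorm_sum_le _ _).trans (Finset.sum_le_sum hlink)
    _ = (μ (ball 0 1))⁻¹ *
          ∫⁻ v in Ω, ENNReal.ofReal (∑ i ∈ Finset.range N, φ i v) * ‖fderiv ℝ f v‖ₑ ∂μ := by
      simp only [hsum, Finset.sum_mul]
      rw [← Finset.mul_sum, lintegral_finsetSum _ fun i _ => hφm i]

theorem enorm_ballAverage_sub_ballAverage_le_of_isPreconnected [Nontrivial E] {Ω A : Set E}
    (hf : ContDiffOn ℝ 1 f Ω) {d : E → ℝ} (hd : LipschitzWith 1 d) (hpos : ∀ y ∈ A, 0 < d y)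
    (hball : ∀ y ∈ A, ball y (d y) ⊆ Ω) (hA : IsPreconnected A) {x x₀ : E} (hx : x ∈ A)
    (hx₀ : x₀ ∈ A) {B : ℝ} (hB : ∀ w ∈ A, dist w x ≤ B * d w) :
    ‖ballAverage μ f x (d x / 4) - ballAverage μ f x₀ (d x₀ / 4)‖ₑ ≤ (μ (ball 0 1))⁻¹ *
      (ENNReal.ofReal (2 * 25 ^ finrank ℝ E * (5 * (B + 1)) ^ (finrank ℝ E - 1)) *
        ∫⁻ v in Ω, ENNReal.ofReal (rieszKernel x v) * ‖fderiv ℝ f v‖ₑ ∂μ) := by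
  obtain ⟨N, z, rfl, rfl, hzA, hstep, hsep⟩ :=
    exists_minimal_chain hA hd.continuous.continuousOn hpos hx hx₀
  have hr (i) : 0 < d (z i) := hpos _ (hzA i)
  refine (enorm_ballAverage_sub_ballAverage_le_of_chain μ hf hd hr
    (fun i => (ball_subset_ball (half_le_self (hr i).le)).trans (hball _ (hzA i)))
    fun i hi => (hstep i hi).trans (by gcongr; exact min_le_left _ _)).trans ?_
  rw [← lintegral_const_mul' _ _ ENNReal.ofReal_ne_top]
  refine mul_le_mul_right (lintegral_mono_ae (ae_restrict_of_ae ?_)) _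
  filter_upwards [Measure.ae_ne μ (z 0)] with v hv
  rw [← mul_assoc, ← ENNReal.ofReal_mul' (by unfold rieszKernel; positivity)]
  gcongr
  exact sum_indicator_ball_le_rieszKernel hd hv.symm hr hsep fun i => hB _ (hzA i)

theorem HasCarrots.enorm_sub_ballAverage_le [Nontrivial E] {Ω : Set E} {x₀ : E} {B : ℝ}
    (hΩ : HasCarrots B Ω x₀) (hopen : IsOpen Ω) (hcompl : Ωᶜ.Nonempty) (hB : 0 ≤ B)
    (hf : ContDiffOn ℝ 1 f Ω) {x : E} (hx : x ∈ Ω) :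
    ‖f x - ballAverage μ f x₀ (infDist x₀ Ωᶜ / 4)‖ₑ ≤ (μ (ball 0 1))⁻¹ *
      (ENNReal.ofReal (1 + 2 * 25 ^ finrank ℝ E * (5 * (B + 1)) ^ (finrank ℝ E - 1)) *
        ∫⁻ v in Ω, ENNReal.ofReal (rieszKernel x v) * ‖fderiv ℝ f v‖ₑ ∂μ) := by
  obtain ⟨A, hAΩ, hA, hxA, hx₀A, hAx⟩ := hΩ x hx
  have hpos : ∀ y ∈ Ω, 0 < infDist y Ωᶜ := fun y hy =>
    (hopen.isClosed_compl.notMem_iff_infDist_pos hcompl).1 (Set.notMem_compl_iff.2 hy)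
  have hball : ∀ y, ball y (infDist y Ωᶜ) ⊆ Ω := fun y => ball_infDist_compl_subset
  have hpx := hpos x hx
  have hcenter := enorm_sub_ballAverage_self_le μ isOpen_ball (convex_ball x _)
    (hf.mono (hball x)) (by positivity : 0 < infDist x Ωᶜ / 4)
    (closedBall_subset_ball (by linarith))
  have hchain := enorm_ballAverage_sub_ballAverage_le_of_isPreconnected μ hf
    (lipschitz_infDist_pt Ωᶜ) (fun y hy => hpos y (hAΩ hy)) (fun y _ => hball y) hA hxA hx₀A hAx
  rw [ENNReal.ofReal_add zero_le_one (by positivity), ENNReal.ofReal_one, add_mul, one_mul, mul_add,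
    ← sub_add_sub_cancel _ (ballAverage μ f x (infDist x Ωᶜ / 4))]
  refine (enorm_add_le _ _).trans (add_le_add (hcenter.trans ?_) hchain)
  gcongr
  exact (ball_subset_ball (by linarith)).trans (hball x)

end CarrotChains

section SchurTest

variable {α : Type*} [MeasurableSpace α] {μ : Measure α}

theorem lintegral_mul_sq_le {k g : α → ℝ≥0∞} (hk : AEMeasurable k μ) (hg : AEMeasurable g μ) :
    (∫⁻ v, k v * g v ∂μ) ^ 2 ≤ (∫⁻ v, k v ∂μ) * ∫⁻ v, k v * g v ^ 2 ∂μ := by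
  have hsqrt (a : ℝ≥0∞) : (a ^ (1 / 2 : ℝ)) ^ 2 = a := by
    rw [← ENNReal.rpow_mul_natCast]; norm_num
  have hsqrt' (a : ℝ≥0∞) : (a ^ 2) ^ (1 / 2 : ℝ) = a := by
    rw [← ENNReal.rpow_natCast_mul]; norm_num
  have hsplit (v : α) : k v ^ (1 / 2 : ℝ) * (k v * g v ^ 2) ^ (1 / 2 : ℝ) = k v * g v := by
    rw [ENNReal.mul_rpow_of_nonneg _ _ (by norm_num), hsqrt', ← mul_assoc, ← sq, hsqrt]
  have hholder := ENNReal.lintegral_mul_norm_pow_le (μ := μ) hk (hk.mul (hg.pow_const 2))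
    (p := 1 / 2) (q := 1 / 2) (by norm_num) (by norm_num) (by norm_num)
  simp only [Pi.mul_apply, hsplit] at hholder
  exact (pow_le_pow_left' hholder 2).trans_eq (by rw [mul_pow, hsqrt, hsqrt])

theorem lintegral_sq_lintegral_mul_le [SFinite μ] {k : α → α → ℝ≥0∞}
    (hk : Measurable (Function.uncurry k)) (hsymm : ∀ x v, k x v = k v x) {S : ℝ≥0∞}
    (hS : ∀ x, ∫⁻ v, k x v ∂μ ≤ S) {g : α → ℝ≥0∞} (hg : Measurable g) :
    ∫⁻ x, (∫⁻ v, k x v * g v ∂μ) ^ 2 ∂μ ≤ S ^ 2 * ∫⁻ v, g v ^ 2 ∂μ := by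
  have hkg : Measurable fun p : α × α => k p.1 p.2 * g p.2 ^ 2 :=
    hk.mul ((hg.comp measurable_snd).pow_const 2)
  calc
    _ ≤ ∫⁻ x, S * ∫⁻ v, k x v * g v ^ 2 ∂μ ∂μ := lintegral_mono fun x =>
      (lintegral_mul_sq_le hk.of_uncurry_left.aemeasurable hg.aemeasurable).trans
        (mul_le_mul_left (hS x) _)
    _ = S * ∫⁻ v, ∫⁻ x, k x v * g v ^ 2 ∂μ ∂μ := by
      rw [lintegral_const_mul _ hkg.lintegral_prod_right',
        lintegral_lintegral_swap hkg.aemeasurable]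
    _ ≤ S * ∫⁻ v, S * g v ^ 2 ∂μ := by
      gcongr with v
      rw [lintegral_mul_const _ hk.of_uncurry_right]
      simp only [hsymm _ v]
      gcongr
      exact hS v
    _ = S ^ 2 * ∫⁻ v, g v ^ 2 ∂μ := by
      rw [lintegral_const_mul _ (hg.pow_const 2), ← mul_assoc, sq]

theorem integral_sub_average_sq_le_integral_sub_sq [IsFiniteMeasure μ] {f : α → ℝ}
    (hf : MemLp f 2 μ) (c : ℝ) :
    ∫ x, (f x - ⨍ y, f y ∂μ) ^ 2 ∂μ ≤ ∫ x, (f x - c) ^ 2 ∂μ := by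
  set m := ⨍ y, f y ∂μ
  have hsq (a : ℝ) : Integrable (fun x => (f x - a) ^ 2) μ := (hf.sub (memLp_const a)).integrable_sq
  have hlin : Integrable (fun x => 2 * (m - c) * (f x - m)) μ :=
    ((hf.integrable one_le_two).sub (integrable_const m)).const_mul _
  calc
    _ ≤ ∫ x, (f x - m) ^ 2 ∂μ + ∫ _, (m - c) ^ 2 ∂μ :=
      le_add_of_nonneg_right (integral_nonneg fun _ => sq_nonneg _)
    _ = ∫ x, (f x - m) ^ 2 ∂μ + ∫ x, (2 * (m - c) * (f x - m) + (m - c) ^ 2) ∂μ := by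
      rw [integral_add hlin (integrable_const _), integral_const_mul, integral_sub_average,
        mul_zero, zero_add]
    _ = ∫ x, (f x - c) ^ 2 ∂μ := by
      refine (integral_add (hsq m) (hlin.add (integrable_const _))).symm.trans ?_
      exact integral_congr_ae (ae_of_all _ fun _ => by simp only [Pi.add_apply]; ring)

theorem memLp_two_of_lintegral_enorm_sq_ne_top {F : Type*} [NormedAddCommGroup F] {f : α → F}
    (hf : AEStronglyMeasurable f μ) (h : ∫⁻ x, ‖f x‖ₑ ^ 2 ∂μ ≠ ⊤) : MemLp f 2 μ := by
  refine ⟨hf, ?_⟩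
  rw [eLpNorm_lt_top_iff_lintegral_rpow_enorm_lt_top two_ne_zero ENNReal.ofNat_ne_top]
  simpa only [ENNReal.toReal_ofNat, ENNReal.rpow_ofNat] using h.lt_top

end SchurTest

section Poincare

open Module

variable {E : Type*} [NormedAddCommGroup E] [NormedSpace ℝ E] [FiniteDimensional ℝ E]
  [Nontrivial E] [MeasurableSpace E] [BorelSpace E] (μ : Measure E) [μ.IsAddHaarMeasure]
  {Ω : Set E} {x₀ : E} {B R : ℝ}

theorem HasCarrots.lintegral_enorm_sub_ballAverage_sq_le {F : Type*} [NormedAddCommGroup F]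
    [NormedSpace ℝ F] [CompleteSpace F] {f : E → F} (hΩ : HasCarrots B Ω x₀) (hopen : IsOpen Ω)
    (hcompl : Ωᶜ.Nonempty) (hB : 0 ≤ B) (hR : 0 < R)
    (hvol : μ Ω ≤ ENNReal.ofReal (R ^ finrank ℝ E)) (hf : ContDiffOn ℝ 1 f Ω) :
    ∫⁻ x in Ω, ‖f x - ballAverage μ f x₀ (infDist x₀ Ωᶜ / 4)‖ₑ ^ 2 ∂μ ≤
      ((μ (ball 0 1))⁻¹ *
        ENNReal.ofReal (1 + 2 * 25 ^ finrank ℝ E * (5 * (B + 1)) ^ (finrank ℝ E - 1)) *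
          ((finrank ℝ E * μ (ball 0 1) + 1) * ENNReal.ofReal R)) ^ 2 *
        ∫⁻ x in Ω, ‖fderiv ℝ f x‖ₑ ^ 2 ∂μ := by
  have hball : μ (ball 0 1) ≠ 0 := (measure_ball_pos μ 0 one_pos).ne'
  calc
    _ ≤ ∫⁻ x in Ω, ((μ (ball 0 1))⁻¹ *
          ENNReal.ofReal (1 + 2 * 25 ^ finrank ℝ E * (5 * (B + 1)) ^ (finrank ℝ E - 1))) ^ 2 *
          (∫⁻ v in Ω, ENNReal.ofReal (rieszKernel x v) * ‖fderiv ℝ f v‖ₑ ∂μ) ^ 2 ∂μ := by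
      refine setLIntegral_mono' hopen.measurableSet fun x hx => ?_
      rw [← mul_pow, mul_assoc]
      gcongr
      exact hΩ.enorm_sub_ballAverage_le μ hopen hcompl hB hf hx
    _ ≤ _ := by
      rw [lintegral_const_mul' _ _ (by finiteness), mul_pow _ (_ * ENNReal.ofReal R),
        mul_assoc (_ ^ 2)]
      gcongr
      exact lintegral_sq_lintegral_mul_le measurable_rieszKernel.ennreal_ofReal
        (fun x v => by rw [rieszKernel_comm])
        (fun x => setLIntegral_rieszKernel_le μ x Ω hR hvol) (measurable_fderiv ℝ f).enorm

theorem HasCarrots.integral_sub_average_sq_le {f : E → ℝ} (hΩ : HasCarrots B Ω x₀)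
    (hopen : IsOpen Ω) (hcompl : Ωᶜ.Nonempty) (hB : 0 ≤ B) (hR : 0 < R)
    (hvol : μ Ω ≤ ENNReal.ofReal (R ^ finrank ℝ E)) (hf : ContDiffOn ℝ 1 f Ω)
    (hgrad : IntegrableOn (fun x => ‖fderiv ℝ f x‖ ^ 2) Ω μ) :
    ∫ x in Ω, (f x - ⨍ y in Ω, f y ∂μ) ^ 2 ∂μ ≤
      ((μ.real (ball 0 1))⁻¹ *
        (1 + 2 * 25 ^ finrank ℝ E * (5 * (B + 1)) ^ (finrank ℝ E - 1)) *
          ((finrank ℝ E * μ.real (ball 0 1) + 1) * R)) ^ 2 *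
        ∫ x in Ω, ‖fderiv ℝ f x‖ ^ 2 ∂μ := by
  have : IsFiniteMeasure (μ.restrict Ω) :=
    isFiniteMeasure_restrict.2 (hvol.trans_lt ENNReal.ofReal_lt_top).ne
  set K := (μ.real (ball 0 1))⁻¹ *
    (1 + 2 * 25 ^ finrank ℝ E * (5 * (B + 1)) ^ (finrank ℝ E - 1)) *
      ((finrank ℝ E * μ.real (ball 0 1) + 1) * R) with hK
  set c := ballAverage μ f x₀ (infDist x₀ Ωᶜ / 4)
  set I := ∫ x in Ω, ‖fderiv ℝ f x‖ ^ 2 ∂μ with hI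
  have hgrad_enorm : ∫⁻ x in Ω, ‖fderiv ℝ f x‖ₑ ^ 2 ∂μ = ENNReal.ofReal I := by
    rw [hI, ofReal_integral_eq_lintegral_ofReal hgrad (ae_of_all _ fun _ => sq_nonneg _)]
    simp only [ENNReal.ofReal_pow (norm_nonneg _), ofReal_norm]
  have hK_ofReal : (μ (ball 0 1))⁻¹ *
      ENNReal.ofReal (1 + 2 * 25 ^ finrank ℝ E * (5 * (B + 1)) ^ (finrank ℝ E - 1)) *
        ((finrank ℝ E * μ (ball 0 1) + 1) * ENNReal.ofReal R) = ENNReal.ofReal K := by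
    have hball : 0 < μ.real (ball (0 : E) 1) :=
      ENNReal.toReal_pos (measure_ball_pos μ 0 one_pos).ne' measure_ball_lt_top.ne
    rw [hK, ENNReal.ofReal_mul (by positivity), ENNReal.ofReal_mul (by positivity),
      ENNReal.ofReal_mul (by positivity), ENNReal.ofReal_add (by positivity) one_pos.le,
      ENNReal.ofReal_mul (by positivity), ENNReal.ofReal_inv_of_pos hball,
      ofReal_measureReal measure_ball_lt_top.ne, ENNReal.ofReal_natCast, ENNReal.ofReal_one]
  have hpoincare : ∫⁻ x in Ω, ‖f x - c‖ₑ ^ 2 ∂μ ≤ ENNReal.ofReal (K ^ 2 * I) := by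
    refine (hΩ.lintegral_enorm_sub_ballAverage_sq_le μ hopen hcompl hB hR hvol hf).trans_eq ?_
    rw [hgrad_enorm, hK_ofReal, ENNReal.ofReal_mul (sq_nonneg _), ENNReal.ofReal_pow]
    positivity
  have hLp : MemLp (fun x => f x - c) 2 (μ.restrict Ω) := by
    refine memLp_two_of_lintegral_enorm_sq_ne_top ?_
      (ne_top_of_le_ne_top ENNReal.ofReal_ne_top hpoincare)
    exact (hf.continuousOn.sub continuousOn_const).aestronglyMeasurable hopen.measurableSet
  have hLp' : MemLp f 2 (μ.restrict Ω) := by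
    simpa only [Pi.add_def, sub_add_cancel] using hLp.add (memLp_const c)
  refine (integral_sub_average_sq_le_integral_sub_sq hLp' c).trans ?_
  rw [← ENNReal.ofReal_le_ofReal_iff (by positivity),
    ofReal_integral_eq_lintegral_ofReal hLp.integrable_sq (ae_of_all _ fun _ => sq_nonneg _)]
  simpa only [← Real.enorm_eq_ofReal (sq_nonneg _), enorm_pow] using hpoincare

end Poincare

/-! ### Numerical constants -/

theorem planar_carrot_const_le {C R : ℝ} (hC : 1 ≤ C) :
    (π⁻¹ * (1 + 2 * 25 ^ 2 * (5 * (2 * (2 * C + 2) * (2 * C + 2 + 1) + 1))) *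
      ((2 * π + 1) * R)) ^ 2 ≤ (6 * 10 ^ 5 * C ^ 2) ^ 2 * R ^ 2 := by
  have hpi : π⁻¹ * (2 * π + 1) ≤ 7 / 3 := by
    rw [inv_mul_le_iff₀ pi_pos]
    linarith [pi_gt_three]
  have hquad : 1 + 2 * 25 ^ 2 * (5 * (2 * (2 * C + 2) * (2 * C + 2 + 1) + 1)) ≤
      256251 * C ^ 2 := by nlinarith
  calc (π⁻¹ * (1 + 2 * 25 ^ 2 * (5 * (2 * (2 * C + 2) * (2 * C + 2 + 1) + 1))) *
        ((2 * π + 1) * R)) ^ 2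
      = (π⁻¹ * (2 * π + 1) *
          (1 + 2 * 25 ^ 2 * (5 * (2 * (2 * C + 2) * (2 * C + 2 + 1) + 1)))) ^ 2 * R ^ 2 := by ring
    _ ≤ (7 / 3 * (256251 * C ^ 2)) ^ 2 * R ^ 2 := by gcongr
    _ ≤ (6 * 10 ^ 5 * C ^ 2) ^ 2 * R ^ 2 := by gcongr ?_ ^ 2 * _; nlinarith [sq_nonneg C]

theorem le_exp_two_pi : 387 ≤ exp (2 * π) := by
  calc (387 : ℝ) ≤ 2.7 ^ 6 := by norm_num
    _ ≤ exp 1 ^ 6 := by gcongr; linarith [exp_one_gt_d9]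
    _ = exp 6 := by rw [← exp_nat_mul]; norm_num
    _ ≤ exp (2 * π) := exp_le_exp.2 (by linarith [pi_gt_three])

theorem mul_pow_four_le_one_add_exp_mul_pow_five_sq {C : ℝ} (hC : 1 ≤ C) :
    387 ^ 2 * C ^ 4 ≤ (1 + exp (2 * π) * C ^ 5) ^ 2 := by
  calc 387 ^ 2 * C ^ 4 = (387 * C ^ 2) ^ 2 := by ring
    _ ≤ (exp (2 * π) * C ^ 5) ^ 2 := by
      gcongr ?_ ^ 2
      exact mul_le_mul le_exp_two_pi (pow_le_pow_right₀ hC (by norm_num)) (by positivity)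
        (exp_pos _).le
    _ ≤ (1 + exp (2 * π) * C ^ 5) ^ 2 := by gcongr; linarith

theorem sq_le_exp_two_mul {C Y : ℝ} (hC : 1 ≤ C) (hY : 387 ^ 2 * C ^ 4 ≤ Y) :
    (6 * 10 ^ 5 * C ^ 2) ^ 2 ≤ 5 * 10 ^ 4 * exp (2 * Y) := by
  have hC4 : 1 ≤ C ^ 4 := one_le_pow₀ hC
  nlinarith [quadratic_le_exp_of_nonneg (by linarith : 0 ≤ 2 * Y)]

theorem lt_three_of_mul_sq_sub_one_lt {K α : ℝ} (hK : 2 ≤ K)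
    (h : α * (K ^ 2 - 1) < 2 * K ^ 2) : α < 3 := by
  by_contra! hα
  have hK2 : 4 ≤ K ^ 2 := by nlinarith
  nlinarith

theorem le_div_rpow_one_div {α ν : ℝ} (hα : 2 < α) (hα3 : α < 3) (hν0 : 0 ≤ ν) (hν : ν < 1) :
    5 * 10 ^ 5 ≤ 10 ^ 6 / ((α - 1) * (1 - ν)) ^ (1 / α) := by
  have hpos : 0 < (α - 1) * (1 - ν) := mul_pos (by linarith) (by linarith)
  rw [le_div_iff₀ (rpow_pos_of_pos hpos _)]
  have : ((α - 1) * (1 - ν)) ^ (1 / α) ≤ 2 := by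
    calc ((α - 1) * (1 - ν)) ^ (1 / α) ≤ 2 ^ (1 / α) :=
        rpow_le_rpow hpos.le (by nlinarith) (by positivity)
      _ ≤ 2 ^ (1 : ℝ) :=
        rpow_le_rpow_of_exponent_le one_le_two ((div_le_one (by linarith)).2 (by linarith))
      _ = 2 := rpow_one 2
  linarith

theorem mul_le_sq_mul_div_mul_mul {A E P X : ℝ} (hA : 5 * 10 ^ 5 ≤ A) (hE : 0 ≤ E) (hP : 1 ≤ P)
    (hX : 1 ≤ X) : 5 * 10 ^ 4 * E ≤ A ^ 2 * E / (2 ^ 20 * π) * P * X := by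
  have hpi : 5 * 10 ^ 4 * (2 ^ 20 * π) ≤ A ^ 2 := by
    calc 5 * 10 ^ 4 * (2 ^ 20 * π) ≤ (5 * 10 ^ 5) ^ 2 := by linarith [pi_le_four]
      _ ≤ A ^ 2 := by gcongr
  have hbase : 5 * 10 ^ 4 * E ≤ A ^ 2 * E / (2 ^ 20 * π) := by
    rw [le_div_iff₀ (by positivity), mul_right_comm]
    gcongr
  have h0 : 0 ≤ A ^ 2 * E / (2 ^ 20 * π) := by positivity
  calc 5 * 10 ^ 4 * E ≤ A ^ 2 * E / (2 ^ 20 * π) := hbase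
    _ ≤ A ^ 2 * E / (2 ^ 20 * π) * P := le_mul_of_one_le_right h0 hP
    _ ≤ A ^ 2 * E / (2 ^ 20 * π) * P * X := le_mul_of_one_le_right (by positivity) hX

theorem sq_le_neumann_const {C K₀ α ν T : ℝ} (hC : 1 ≤ C)
    (hK₀ : K₀ = exp ((1 + exp (2 * π) * C ^ 5) ^ 2) / 2 ^ 10) (hα : 2 < α)
    (hαK : α * (K₀ ^ 2 - 1) < 2 * K₀ ^ 2) (hν0 : 0 ≤ ν) (hν : ν < 1) (hT : 0 ≤ T) :
    (6 * 10 ^ 5 * C ^ 2) ^ 2 ≤ (10 ^ 6 / ((α - 1) * (1 - ν)) ^ (1 / α)) ^ 2 *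
      exp (2 * (1 + exp (2 * π) * C ^ 5) ^ 2) / (2 ^ 20 * π) *
        ((2 * α - 2) / (α - 2)) ^ ((2 * α - 2) / α) * exp T := by
  have hY := mul_pow_four_le_one_add_exp_mul_pow_five_sq hC
  have hC4 : 1 ≤ C ^ 4 := one_le_pow₀ hC
  have hK : 2 ≤ K₀ := by
    rw [hK₀, le_div_iff₀ (by positivity)]
    linarith [add_one_le_exp ((1 + exp (2 * π) * C ^ 5) ^ 2)]
  have hα3 : α < 3 := lt_three_of_mul_sq_sub_one_lt hK hαK
  refine (sq_le_exp_two_mul hC hY).trans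
    (mul_le_sq_mul_div_mul_mul (le_div_rpow_one_div hα hα3 hν0 hν) (exp_pos _).le
      (one_le_rpow ?_ ?_) (one_le_exp hT))
  · rw [le_div_iff₀ (by linarith)]
    linarith
  · exact div_nonneg (by linarith) (by linarith)

/-! ### The Poincaré inequality for bounded turning boundaries -/

theorem neumann_poincare_ahlfors_domain_general {C : ℝ} (hC : 1 ≤ C) {Γ : Set ℂ}
    (hΓ : BoundedTurning C Γ) (hclosed : IsClosed Γ) {z : ℂ}
    (hbdd : Bornology.IsBounded (connectedComponentIn Γᶜ z)) {f : ℂ → ℝ}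
    (hf : ContDiffOn ℝ 1 f (connectedComponentIn Γᶜ z))
    (hgrad : IntegrableOn (fun w => ‖fderiv ℝ f w‖ ^ 2) (connectedComponentIn Γᶜ z)) :
    ∫ w in connectedComponentIn Γᶜ z, (f w - ⨍ w in connectedComponentIn Γᶜ z, f w) ^ 2 ≤
      (6 * 10 ^ 5 * C ^ 2) ^ 2 * (volume (connectedComponentIn Γᶜ z)).toReal *
        ∫ w in connectedComponentIn Γᶜ z, ‖fderiv ℝ f w‖ ^ 2 := by
  have hopen : IsOpen (connectedComponentIn Γᶜ z) := hclosed.isOpen_compl.connectedComponentIn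
  have hcigars := hΓ.hasCigars (by linarith) hclosed hbdd
  set Ω := connectedComponentIn Γᶜ z
  rcases Ω.eq_empty_or_nonempty with hempty | hne
  · simp [hempty]
  have hcompl : Ωᶜ.Nonempty := Set.nonempty_compl.2 fun h =>
    NormedSpace.unbounded_univ ℝ ℂ (h ▸ hbdd)
  obtain ⟨x₀, hx₀, hmax⟩ := exists_mem_isMaxOn_infDist_compl hopen hne hcompl hbdd
  have hcarrots := hcigars.hasCarrots_of_isMaxOn (by linarith) hx₀ hmax
  have hfin : volume Ω ≠ ⊤ := hbdd.measure_lt_top.ne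
  have hV : 0 < (volume Ω).toReal := ENNReal.toReal_pos (hopen.measure_pos volume hne).ne' hfin
  have hdisc : volume.real (ball (0 : ℂ) 1) = π := by
    simp [measureReal_def]
  have hpoincare := hcarrots.integral_sub_average_sq_le volume hopen hcompl (by positivity)
    (Real.sqrt_pos.2 hV) (by
      rw [Complex.finrank_real_complex, Real.sq_sqrt hV.le, ENNReal.ofReal_toReal hfin]) hf hgrad
  rw [Complex.finrank_real_complex, hdisc] at hpoincare
  refine hpoincare.trans ?_
  gcongr
  simpa only [Nat.cast_ofNat, Nat.add_one_sub_one, pow_one, Real.sq_sqrt hV.le] using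
    planar_carrot_const_le (R := √(volume Ω).toReal) hC

/-- Spectral-type Poincaré inequality (Rayleigh-quotient form of the lower
bound for the first nontrivial Neumann eigenvalue, Corollary of Theorem A and
the Ahlfors reflection theorem) in a bounded domain `Ω` whose boundary is a
Jordan curve `γ` satisfying the Ahlfors three-point (bounded turning)
condition with constant `C ≥ 1`; `K₀ = 2^{−10}·exp{(1+e^{2π}C⁵)²}`. -/
theorem neumann_poincare_ahlfors_domain
    (C : ℝ) (hC : 1 ≤ C)
    (γ : ℝ → ℂ) (hγc : Continuous γ) (hγp : ∀ t : ℝ, γ (t + 1) = γ t)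
    (hγi : Set.InjOn γ (Set.Ico (0 : ℝ) 1))
    (Ω : Set ℂ) (z : ℂ)
    (hΩ : Ω = connectedComponentIn (γ '' Set.Icc (0 : ℝ) 1)ᶜ z)
    (hbdd : Bornology.IsBounded Ω)
    (hfr : frontier Ω = γ '' Set.Icc (0 : ℝ) 1)
    (hahl : ∀ s t : ℝ, 0 ≤ s → s ≤ t → t ≤ 1 →
      min (Metric.diam (γ '' Set.Icc s t)) (Metric.diam (γ '' Set.Icc t (s + 1)))
        ≤ C * dist (γ s) (γ t))
    (K₀ : ℝ) (hK₀ : K₀ = Real.exp ((1 + Real.exp (2 * π) * C ^ 5) ^ 2) / 2 ^ 10)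
    (α : ℝ) (hα : 2 < α) (hαK : α * (K₀ ^ 2 - 1) < 2 * K₀ ^ 2)
    (hν : (10 : ℝ) ^ (4 * α) *
        ((24 * π ^ 2 / 2 ^ 20) * Real.exp (2 * (1 + Real.exp (2 * π) * C ^ 5) ^ 2)) ^ α *
        ((α - 2) / (α - 1)) < 1)
    (f : ℂ → ℝ) (hf : ContDiffOn ℝ 1 f Ω)
    (hf2 : IntegrableOn (fun z => (f z) ^ 2) Ω)
    (hg2 : IntegrableOn (fun z => ‖fderiv ℝ f z‖ ^ 2) Ω) :
    ∫ w in Ω, (f w - ⨍ w in Ω, f w) ^ 2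
      ≤ ((10 ^ 6 /
            ((α - 1) *
              (1 - (10 : ℝ) ^ (4 * α) *
                ((24 * π ^ 2 / 2 ^ 20) *
                  Real.exp (2 * (1 + Real.exp (2 * π) * C ^ 5) ^ 2)) ^ α *
                ((α - 2) / (α - 1)))) ^ (1 / α)) ^ 2 *
            Real.exp (2 * (1 + Real.exp (2 * π) * C ^ 5) ^ 2) / (2 ^ 20 * π)) *
          ((2 * α - 2) / (α - 2)) ^ ((2 * α - 2) / α) *
          Real.exp (π ^ 2 * (2 + π ^ 4) ^ 2 *
            Real.exp (2 * (1 + Real.exp (2 * π) * C ^ 5) ^ 2) / (2 ^ 21 * Real.log 3)) *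
          (volume Ω).toReal *
          ∫ w in Ω, ‖fderiv ℝ f w‖ ^ 2 := by
  subst hΩ
  have hΓ : BoundedTurning C (γ '' Set.Icc (0 : ℝ) 1) :=
    boundedTurning_image_of_diam_le hγc hγp hahl
  have hclosed : IsClosed (γ '' Set.Icc (0 : ℝ) 1) := (isCompact_Icc.image hγc).isClosed
  refine (neumann_poincare_ahlfors_domain_general hC hΓ hclosed hbdd hf hg2).trans ?_
  have hν0 : 0 ≤ (α - 2) / (α - 1) := div_nonneg (by linarith) (by linarith)
  gcongr
  exact sq_le_neumann_const hC hK₀ hα hαK (by positivity) hν (by positivity)
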